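/- Let V be a PVASS and let C_s, C_t be two configurations of V such that C_s does not reach C_t, i.e. ¬(C_s →_V* C_t). Then there exists a set S of configurations of V such that: (i) for every state q, the set {x ∈ ℕ^d : (q,x) ∈ S} is semilinear; (ii) S is an inductive invariant, i.e. whenever c ∈ S and c →_V c' then c' ∈ S; and (iii) C_s ∈ S and C_t ∉ S. -/

import Mathlib

/-- Vectors of naturals of dimension `d`. -/
abbrev NVec (d : ℕ) := Fin d → ℕ

/-- A priority vector addition system with states (PVASS) of dimension `d`:
a finite set of states `Q`, a finite set of edges `E`, each edge having a source,
a target, an update vector in `ℤ^d` and a test level `g(e) ∈ {0,…,d}`. -/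
structure PVASS (d : ℕ) where
  Q : Type
  E : Type
  fintypeQ : Fintype Q
  fintypeE : Fintype E
  src : E → Q
  tgt : E → Q
  upd : E → Fin d → ℤ
  test : E → ℕ
  test_le : ∀ e, test e ≤ d

namespace PVASS

variable {d : ℕ} (V : PVASS d)

/-- The one-step relation of a PVASS: an edge `e` can be taken from `(q,x)` to `(q',x')`
iff `q = src e`, `q' = tgt e`, the first `test e` counters of `x` are zero, and
`x' = x + upd e` (staying nonnegative, which is automatic since `x' ∈ ℕ^d`). -/
def Step (c c' : V.Q × NVec d) : Prop :=
  ∃ e : V.E, V.src e = c.1 ∧ V.tgt e = c'.1 ∧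
    (∀ j : Fin d, (j : ℕ) < V.test e → c.2 j = 0) ∧
    ∀ i : Fin d, (c'.2 i : ℤ) = (c.2 i : ℤ) + V.upd e i

/-- The reachability relation: reflexive transitive closure of the step relation. -/
def Reach : V.Q × NVec d → V.Q × NVec d → Prop := Relation.ReflTransGen V.Step

end PVASS

/-- A set in a commutative monoid is linear if it is of the form
`b + ℕ·p₁ + … + ℕ·p_r`. -/
def IsLinearSubset {M : Type*} [AddCommMonoid M] (L : Set M) : Prop :=
  ∃ (b : M) (r : ℕ) (p : Fin r → M),
    L = {x | ∃ c : Fin r → ℕ, x = b + ∑ i, c i • p i}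

/-- A set is semilinear if it is a finite union of linear sets. -/
def IsSemilinearSubset {M : Type*} [AddCommMonoid M] (S : Set M) : Prop :=
  ∃ (n : ℕ) (L : Fin n → Set M), (∀ i, IsLinearSubset (L i)) ∧ S = ⋃ i, L i

/-!
Call a set of vectors *tame* if it carries a well-quasi-order in which the points above `x` are
obtained by adding the members of a submonoid of pumping vectors of `x`, where every section of
that submonoid by a rational subspace is dense in a finitely generated submonoid. These are, in
essence, Leroux's almost semilinear sets. Tame sets are closed under unions, linear preimages and
images, and hence under composition of relations.

Let `R` be a tame relation on the vectors vanishing on `J` that is stable under adding such a vector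
to both sides. Then its reflexive-transitive closure is tame. Runs are well-quasi-ordered by
Higman's lemma, and are pumped by inserting, at a configuration `c` on the run, a transformation
from `c + r` to `c + s`. To see that these transformers form a tame submonoid, ignore the
coordinates that can be pumped at `c`, since those can be made as large as needed. What remains is a
finite multigraph, whose flows are realized by closed walks by Euler's theorem. As the tests of a
PVASS are nested, its reachability relation is obtained by adding one test level at a time to such a
closure, so it is tame.

Replacing each submonoid of a tame set by its intersection with a finitely generated one in which it
is dense gives a semilinear over-approximation, the linearization. Linearizations of disjoint tame
subsets of a linear set meet in a set of smaller dimension. So, starting from `S = {C_s}` and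
`T = {C_t}`, one can enlarge semilinear sets `S` and `T`, keeping the points of `S` from reaching
those of `T`, so that the dimension of the complement of `S ∪ T` decreases. Once `S ∪ T` is
everything, `S` is an invariant.
-/

/-! ### Tame submonoids -/

section Submonoids

variable {N N' : Type*} [AddCommMonoid N] [AddCommMonoid N']

/-- Submonoids closed under subtraction and under division by positive integers: in a torsion-free
cancellative monoid, the traces of the `ℚ`-subspaces of its rational hull. -/
structure IsLinearTrace (U : AddSubmonoid N) : Prop where
  mem_of_add_mem : ∀ x ∈ U, ∀ y, x + y ∈ U → y ∈ U
  mem_of_nsmul_mem : ∀ k : ℕ, k ≠ 0 → ∀ x, k • x ∈ U → x ∈ U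

namespace IsLinearTrace

theorem top : IsLinearTrace (⊤ : AddSubmonoid N) where
  mem_of_add_mem _ _ _ _ := trivial
  mem_of_nsmul_mem _ _ _ _ := trivial

theorem inf {U V : AddSubmonoid N} (hU : IsLinearTrace U) (hV : IsLinearTrace V) :
    IsLinearTrace (U ⊓ V) where
  mem_of_add_mem x hx y hxy :=
    ⟨hU.mem_of_add_mem x hx.1 y hxy.1, hV.mem_of_add_mem x hx.2 y hxy.2⟩
  mem_of_nsmul_mem k hk x hx :=
    ⟨hU.mem_of_nsmul_mem k hk x hx.1, hV.mem_of_nsmul_mem k hk x hx.2⟩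

theorem comap {U : AddSubmonoid N'} (hU : IsLinearTrace U) (f : N →+ N') :
    IsLinearTrace (U.comap f) where
  mem_of_add_mem x hx y hxy :=
    hU.mem_of_add_mem (f x) hx (f y) (by simpa only [AddSubmonoid.mem_comap, map_add] using hxy)
  mem_of_nsmul_mem k hk x hx :=
    hU.mem_of_nsmul_mem k hk (f x) (by simpa only [AddSubmonoid.mem_comap, map_nsmul] using hx)

theorem prod {U : AddSubmonoid N} {V : AddSubmonoid N'} (hU : IsLinearTrace U)
    (hV : IsLinearTrace V) : IsLinearTrace (U.prod V) :=
  (hU.comap (.fst N N')).inf (hV.comap (.snd N N'))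

theorem eqLocusM [IsCancelAdd N'] [IsAddTorsionFree N'] (f g : N →+ N') :
    IsLinearTrace (f.eqLocusM g) where
  mem_of_add_mem x hx y hxy := by
    simp only [AddMonoidHom.mem_eqLocusM, map_add] at *
    exact add_left_cancel (hx ▸ hxy)
  mem_of_nsmul_mem k hk x hx := by
    simp only [AddMonoidHom.mem_eqLocusM, map_nsmul] at *
    exact nsmul_right_injective hk hx

end IsLinearTrace

theorem fg_inf_of_subtractive {C U : AddSubmonoid N} (hC : C.FG)
    (hU : ∀ x ∈ U, ∀ y, x + y ∈ U → y ∈ U) : (C ⊓ U).FG := by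
  obtain ⟨n, φ, rfl⟩ := AddSubmonoid.fg_iff_exists_fin_addMonoidHom.1 hC
  have hφU : (U.comap φ).FG := AddSubmonoid.fg_of_subtractive fun x hx y hxy =>
    hU (φ x) hx (φ y) (by simpa only [AddSubmonoid.mem_comap, map_add] using hxy)
  have : AddMonoidHom.mrange φ ⊓ U = (U.comap φ).map φ := by
    rw [inf_comm, AddSubmonoid.map_comap_eq]
  exact this ▸ hφU.map φ

/-- The elements that become members of `P` after adding a member of `P`: the trace on `N` of the
group generated by `P`. -/
def groupTrace (P : AddSubmonoid N) : AddSubmonoid N where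
  carrier := {x | ∃ p ∈ P, x + p ∈ P}
  zero_mem' := ⟨0, P.zero_mem, by simp⟩
  add_mem' := by
    rintro x y ⟨p, hp, hxp⟩ ⟨q, hq, hyq⟩
    exact ⟨p + q, add_mem hp hq, by rw [add_add_add_comm]; exact add_mem hxp hyq⟩

theorem le_groupTrace (P : AddSubmonoid N) : P ≤ groupTrace P :=
  fun x hx => ⟨0, P.zero_mem, by rwa [add_zero]⟩

theorem groupTrace_subtractive (P : AddSubmonoid N) :
    ∀ x ∈ groupTrace P, ∀ y, x + y ∈ groupTrace P → y ∈ groupTrace P := by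
  rintro x ⟨p, hp, hxp⟩ y ⟨q, hq, hxyq⟩
  refine ⟨x + p + q, add_mem hxp hq, ?_⟩
  rw [show y + (x + p + q) = x + y + q + p by abel]
  exact add_mem hxyq hp

/-- The elements with a positive multiple in `groupTrace P`: the trace on `N` of the `ℚ`-subspace
spanned by `P`. -/
def spanTrace (P : AddSubmonoid N) : AddSubmonoid N where
  carrier := {x | ∃ k : ℕ, k ≠ 0 ∧ k • x ∈ groupTrace P}
  zero_mem' := ⟨1, one_ne_zero, by simp⟩
  add_mem' := by
    rintro x y ⟨k, hk, hx⟩ ⟨l, hl, hy⟩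
    refine ⟨k * l, mul_ne_zero hk hl, ?_⟩
    rw [show (k * l) • (x + y) = l • k • x + k • l • y by
      rw [smul_add, ← mul_smul, ← mul_smul, mul_comm l k]]
    exact add_mem (nsmul_mem hx l) (nsmul_mem hy k)

theorem isLinearTrace_spanTrace (P : AddSubmonoid N) : IsLinearTrace (spanTrace P) where
  mem_of_add_mem := by
    rintro x ⟨k, hk, hx⟩ y ⟨l, hl, hxy⟩
    refine ⟨l * k, mul_ne_zero hl hk, groupTrace_subtractive P ((l * k) • x) ?_ _ ?_⟩
    · rw [mul_smul]
      exact nsmul_mem hx l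
    · rw [← smul_add, mul_comm, mul_smul]
      exact nsmul_mem hxy k
  mem_of_nsmul_mem := by
    rintro k hk x ⟨l, hl, hx⟩
    exact ⟨l * k, mul_ne_zero hl hk, by rwa [mul_smul]⟩

theorem le_spanTrace (P : AddSubmonoid N) : P ≤ spanTrace P :=
  fun x hx => ⟨1, one_ne_zero, by rw [one_smul]; exact le_groupTrace P hx⟩

/-- The smallest face of `P` containing `S`, if `S ≤ P`: all summands in `P` of elements of `S`. -/
def face (P S : AddSubmonoid N) : AddSubmonoid N where
  carrier := {w | w ∈ P ∧ ∃ w' ∈ P, w + w' ∈ S}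
  zero_mem' := ⟨P.zero_mem, 0, P.zero_mem, by simp⟩
  add_mem' := by
    rintro x y ⟨hx, x', hx', hxS⟩ ⟨hy, y', hy', hyS⟩
    exact ⟨add_mem hx hy, x' + y', add_mem hx' hy', by
      rw [add_add_add_comm]; exact add_mem hxS hyS⟩

theorem inf_spanTrace_face (P S : AddSubmonoid N) : P ⊓ spanTrace (face P S) = face P S := by
  refine le_antisymm ?_ (le_inf (fun x hx => hx.1) (le_spanTrace _))
  rintro x ⟨hx, k, hk, f, hf, -, w, hw, hS⟩
  obtain ⟨k, rfl⟩ := Nat.exists_eq_succ_of_ne_zero hk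
  refine ⟨hx, k • x + f + w, add_mem (add_mem (nsmul_mem hx k) hf.1) hw, ?_⟩
  rwa [show x + (k • x + f + w) = (k + 1) • x + f + w by rw [succ_nsmul']; abel]

/-- `P ≤ C` and the cone of `P` is dense in the cone of `C`: every segment from an element of `C`
towards `p₀` meets the cone of `P`. -/
structure DenseIn (P C : AddSubmonoid N) : Prop where
  le : P ≤ C
  exists_offset : ∃ p₀ ∈ P, ∀ c ∈ C, ∃ k : ℕ, k ≠ 0 ∧ k • (c + p₀) ∈ P

theorem DenseIn.refl (P : AddSubmonoid N) : DenseIn P P where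
  le := le_rfl
  exists_offset := ⟨0, P.zero_mem, fun c hc => ⟨1, one_ne_zero, by simpa using hc⟩⟩

theorem DenseIn.map {P C : AddSubmonoid N} (h : DenseIn P C) (f : N →+ N') :
    DenseIn (P.map f) (C.map f) where
  le := AddSubmonoid.monotone_map h.le
  exists_offset := by
    obtain ⟨p₀, hp₀, hC⟩ := h.exists_offset
    refine ⟨f p₀, AddSubmonoid.mem_map_of_mem f hp₀, ?_⟩
    rintro _ ⟨c, hc, rfl⟩
    obtain ⟨k, hk, hmem⟩ := hC c hc
    exact ⟨k, hk, _, hmem, by simp⟩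

/-- A submonoid that is dense in a finitely generated one. -/
def NearlyFG (P : AddSubmonoid N) : Prop := ∃ C : AddSubmonoid N, C.FG ∧ DenseIn P C

/-- A submonoid all of whose sections by linear traces are nearly finitely generated. -/
def IsTameSubmonoid (P : AddSubmonoid N) : Prop :=
  ∀ U : AddSubmonoid N, IsLinearTrace U → NearlyFG (P ⊓ U)

/-- Each coordinate of `∑ e, q e` absorbs the offset of that coordinate. -/
theorem denseIn_pi_inf {E : Type*} [Finite E] {N : E → Type*} [∀ e, AddCommMonoid (N e)]
    {P C : ∀ e, AddSubmonoid (N e)} {U : AddSubmonoid (∀ e, N e)}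
    (h : ∀ e, DenseIn
      (face (P e) ((AddSubmonoid.pi Set.univ P ⊓ U).map (Pi.evalAddMonoidHom N e))) (C e)) :
    DenseIn (AddSubmonoid.pi Set.univ P ⊓ U) (AddSubmonoid.pi Set.univ C ⊓ U) := by
  classical
  have := Fintype.ofFinite E
  choose p₀ hp₀ hC using fun e => (h e).exists_offset
  choose r hr q hq hqr using fun e => (hp₀ e).2
  refine ⟨fun x hx => ⟨fun e _ => (h e).le ⟨hx.1 e trivial, 0, zero_mem _, x, hx, ?_⟩, hx.2⟩,
    ∑ e, q e, AddSubmonoid.sum_mem _ fun e _ => hq e, ?_⟩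
  · simp only [Pi.evalAddMonoidHom_apply, add_zero]
  rintro c ⟨hc, hcU⟩
  choose k hk hkmem using fun e => hC e (c e) (hc e trivial)
  refine ⟨∏ e, k e, Finset.prod_ne_zero_iff.2 fun e _ => hk e, fun e _ => ?_,
    nsmul_mem (add_mem hcU (AddSubmonoid.sum_mem _ fun e _ => (hq e).2)) _⟩
  have hsum : (∑ e', q e') e = p₀ e + (r e + ∑ e' ∈ Finset.univ.erase e, q e' e) := by
    rw [Finset.sum_apply, ← Finset.add_sum_erase _ _ (Finset.mem_univ e), ← add_assoc, ← hqr,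
      Pi.evalAddMonoidHom_apply]
  have hrest : r e + ∑ e' ∈ Finset.univ.erase e, q e' e ∈ P e :=
    add_mem (hr e) (AddSubmonoid.sum_mem _ fun e' _ => (hq e').1 e trivial)
  have hfactor : (∏ e', k e') • (c e + p₀ e) ∈ P e := by
    rw [← Finset.mul_prod_erase _ _ (Finset.mem_univ e), mul_comm, mul_smul]
    exact nsmul_mem (hkmem e).1 _
  rw [Pi.smul_apply, Pi.add_apply, hsum, ← add_assoc, smul_add]
  exact add_mem hfactor (nsmul_mem hrest _)

namespace IsTameSubmonoid

theorem of_fg {P : AddSubmonoid N} (h : P.FG) : IsTameSubmonoid P :=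
  fun _ hU => ⟨_, fg_inf_of_subtractive h hU.mem_of_add_mem, DenseIn.refl _⟩

theorem inf {P U : AddSubmonoid N} (h : IsTameSubmonoid P) (hU : IsLinearTrace U) :
    IsTameSubmonoid (P ⊓ U) := fun V hV => by
  rw [inf_assoc]
  exact h _ (hU.inf hV)

theorem nearlyFG {P : AddSubmonoid N} (h : IsTameSubmonoid P) : NearlyFG P := by
  simpa only [inf_top_eq] using h ⊤ IsLinearTrace.top

theorem map {P : AddSubmonoid N} (h : IsTameSubmonoid P) (f : N →+ N') :
    IsTameSubmonoid (P.map f) := fun U hU => by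
  obtain ⟨C, hC, hPC⟩ := h _ (hU.comap f)
  have : (P ⊓ U.comap f).map f = P.map f ⊓ U :=
    SetLike.coe_injective (Set.image_inter_preimage f P U)
  exact this ▸ ⟨C.map f, hC.map f, hPC.map f⟩

theorem pi {E : Type*} [Finite E] {N : E → Type*} [∀ e, AddCommMonoid (N e)]
    {P : ∀ e, AddSubmonoid (N e)} (hP : ∀ e, IsTameSubmonoid (P e)) :
    IsTameSubmonoid (AddSubmonoid.pi Set.univ P) := fun U hU => by
  have hface (e : E) (S : AddSubmonoid (N e)) : NearlyFG (face (P e) S) :=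
    inf_spanTrace_face (P e) S ▸ hP e _ (isLinearTrace_spanTrace _)
  choose C hC hdense using fun e =>
    hface e ((AddSubmonoid.pi Set.univ P ⊓ U).map (Pi.evalAddMonoidHom N e))
  exact ⟨_, fg_inf_of_subtractive (AddSubmonoid.FG.pi hC) hU.mem_of_add_mem, denseIn_pi_inf hdense⟩

theorem sup {P Q : AddSubmonoid N} (hP : IsTameSubmonoid P) (hQ : IsTameSubmonoid Q) :
    IsTameSubmonoid (P ⊔ Q) := by
  let R : Bool → AddSubmonoid N := fun b => bif b then P else Q
  have hR : IsTameSubmonoid (AddSubmonoid.pi Set.univ R) :=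
    pi fun b => by cases b <;> assumption
  have : P ⊔ Q = (AddSubmonoid.pi Set.univ R).map
      (Pi.evalAddMonoidHom (fun _ => N) true + Pi.evalAddMonoidHom (fun _ => N) false) := by
    ext x
    rw [AddSubmonoid.mem_sup]
    constructor
    · rintro ⟨p, hp, q, hq, rfl⟩
      exact ⟨fun b => bif b then p else q, fun b _ => by cases b <;> assumption, rfl⟩
    · rintro ⟨z, hz, rfl⟩
      exact ⟨z true, hz true trivial, z false, hz false trivial, rfl⟩
  exact this ▸ hR.map _

theorem prod {P : AddSubmonoid N} {Q : AddSubmonoid N'} (hP : IsTameSubmonoid P)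
    (hQ : IsTameSubmonoid Q) : IsTameSubmonoid (P.prod Q) := by
  rw [← AddSubmonoid.prod_bot_sup_bot_prod, ← AddSubmonoid.map_inl, ← AddSubmonoid.map_inr]
  exact (hP.map _).sup (hQ.map _)

end IsTameSubmonoid

end Submonoids

open Set SetRel
open scoped Pointwise

/-! ### Tame sets -/

section Sets

variable {N N' : Type*} [AddCommMonoid N] [AddCommMonoid N']

/-- A well-quasi-order on the points of `X` together with a tame submonoid of pumping vectors at
each point: pumping stays in `X`, and every larger point is reached by pumping. -/
structure PumpingOrder (X : Set N) where
  le : X → X → Prop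
  isPreorder : IsPreorder X le
  wqo : WellQuasiOrdered le
  pumps : X → AddSubmonoid N
  tame : ∀ x, IsTameSubmonoid (pumps x)
  exists_pump : ∀ x y, le x y → ∃ w ∈ pumps x, (y : N) = x + w
  pump_mem : ∀ x, ∀ w ∈ pumps x, (x : N) + w ∈ X

/-- A set that carries a `PumpingOrder`. -/
def IsTameSet (X : Set N) : Prop := Nonempty (PumpingOrder X)

theorem exists_finset_basis_of_wellQuasiOrdered {Ω : Type*} {le : Ω → Ω → Prop}
    (h : WellQuasiOrdered le) : ∃ F : Finset Ω, ∀ x, ∃ y ∈ F, le y x := by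
  by_contra! hc
  obtain ⟨f, -, hf⟩ := exists_seq_of_forall_finset_exists (fun _ : Ω => True)
    (fun x y => ¬ le x y) (fun s _ => (hc s).imp fun _ hx => ⟨trivial, hx⟩)
  obtain ⟨m, n, hmn, hle⟩ := h f
  exact hf m n hmn hle

theorem wellQuasiOrdered_sigmaLex {ι : Type*} [Finite ι] {α : ι → Type*}
    {r : ∀ i, α i → α i → Prop} (hr : ∀ i, WellQuasiOrdered (r i)) :
    WellQuasiOrdered (Sigma.Lex emptyRelation r) := by
  intro f
  obtain ⟨g, hg⟩ := (Finite.wellQuasiOrdered (Eq : ι → ι → Prop)).exists_monotone_subseq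
    fun n => (f n).1
  have hconst (n : ℕ) : ∃ a, f (g n) = ⟨(f (g 0)).1, a⟩ := by
    rw [hg 0 n n.zero_le]
    exact ⟨_, rfl⟩
  choose a ha using hconst
  obtain ⟨m, n, hmn, hle⟩ := hr (f (g 0)).1 a
  refine ⟨g m, g n, g.strictMono hmn, ?_⟩
  rw [ha m, ha n]
  exact Sigma.Lex.right _ _ hle

/-- The pairs `((a, b), (b, c))`. -/
def composablePairs (A B C : Type*) [AddCommMonoid A] [AddCommMonoid B] [AddCommMonoid C] :
    AddSubmonoid ((A × B) × (B × C)) :=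
  ((AddMonoidHom.snd A B).comp (.fst _ _)).eqLocusM ((AddMonoidHom.fst B C).comp (.snd _ _))

theorem comp_eq_image {A B C : Type*} [AddCommMonoid A] [AddCommMonoid B] [AddCommMonoid C]
    (X : SetRel A B) (Y : SetRel B C) :
    X ○ Y = (AddMonoidHom.fst A B).prodMap (AddMonoidHom.snd B C) ''
      (X ×ˢ Y ∩ composablePairs A B C) := by
  ext ⟨a, c⟩
  constructor
  · rintro ⟨b, hab, hbc⟩
    exact ⟨((a, b), (b, c)), ⟨⟨hab, hbc⟩, rfl⟩, rfl⟩
  · rintro ⟨⟨⟨a, b⟩, ⟨b', c⟩⟩, ⟨⟨hab, hbc⟩, hb : b = b'⟩, h⟩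
    obtain ⟨rfl, rfl⟩ := Prod.mk.inj h
    exact ⟨b, hab, hb ▸ hbc⟩

namespace IsTameSet

theorem of_presentation {X : Set N} {Ω : Type*} (le : Ω → Ω → Prop) [IsPreorder Ω le]
    (wqo : WellQuasiOrdered le) (val : Ω → N) (pumps : Ω → AddSubmonoid N)
    (tame : ∀ a, IsTameSubmonoid (pumps a))
    (exists_pump : ∀ a b, le a b → ∃ w ∈ pumps a, val b = val a + w)
    (pump_mem : ∀ a, ∀ w ∈ pumps a, val a + w ∈ X) (surj : ∀ x ∈ X, ∃ a, val a = x) :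
    IsTameSet X := by
  choose s hs using fun x : X => surj x x.2
  exact ⟨{
    le := fun x y => le (s x) (s y)
    isPreorder :=
      { refl := fun x => refl_of le (s x)
        trans := fun x y z => trans_of le }
    wqo := fun f => wqo fun n => s (f n)
    pumps := fun x => pumps (s x)
    tame := fun x => tame (s x)
    exists_pump := fun x y h => by simpa only [hs] using exists_pump _ _ h
    pump_mem := fun x w hw => by simpa only [hs] using pump_mem _ w hw }⟩

theorem exists_cover {X O : Set N} (hX : IsTameSet X) (hO : O ⊆ X)
    {Z : AddSubmonoid N} (hZ : IsLinearTrace Z)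
    (hOZ : ∀ x w, x ∈ O → x + w ∈ O → w ∈ Z) :
    ∃ (F : Finset O) (P : O → AddSubmonoid N), (∀ b, IsTameSubmonoid (P b)) ∧ (∀ b, P b ≤ Z) ∧
      (∀ b : O, ∀ w ∈ P b, (b : N) + w ∈ X) ∧ ∀ x ∈ O, ∃ b ∈ F, ∃ w ∈ P b, (b : N) + w = x := by
  obtain ⟨D⟩ := hX
  let incl : O → X := inclusion hO
  obtain ⟨F, hF⟩ := exists_finset_basis_of_wellQuasiOrdered
    (le := fun x y => D.le (incl x) (incl y)) fun f => D.wqo fun n => incl (f n)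
  refine ⟨F, fun b => D.pumps (incl b) ⊓ Z, fun b => (D.tame _).inf hZ, fun b => inf_le_right,
    fun b w hw => D.pump_mem _ w hw.1, fun x hx => ?_⟩
  obtain ⟨b, hb, hle⟩ := hF ⟨x, hx⟩
  obtain ⟨w, hw, rfl⟩ := D.exists_pump _ _ hle
  exact ⟨b, hb, w, ⟨hw, hOZ _ _ b.2 hx⟩, rfl⟩

theorem exists_finset_eq_biUnion {X : Set N} (hX : IsTameSet X) :
    ∃ (F : Finset X) (P : X → AddSubmonoid N), (∀ b, IsTameSubmonoid (P b)) ∧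
      X = ⋃ b ∈ F, (b : N) +ᵥ (P b : Set N) := by
  obtain ⟨F, P, hP, -, hadd, hcover⟩ :=
    hX.exists_cover Subset.rfl IsLinearTrace.top fun _ _ _ _ => trivial
  refine ⟨F, P, hP, Subset.antisymm (fun x hx => ?_) ?_⟩
  · obtain ⟨b, hb, w, hw, rfl⟩ := hcover x hx
    exact mem_biUnion hb (vadd_mem_vadd_set hw)
  · refine iUnion₂_subset fun b _ => ?_
    rintro _ ⟨w, hw, rfl⟩
    exact hadd b w hw

theorem of_isLinearSet {X : Set N} (hX : IsLinearSet X) : IsTameSet X := by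
  obtain ⟨b, n, φ, rfl⟩ := isLinearSet_iff_exists_fin_addMonoidHom.1 hX
  have hfg : (AddMonoidHom.mrange φ).FG := AddSubmonoid.fg_iff_exists_fin_addMonoidHom.2 ⟨n, φ, rfl⟩
  refine of_presentation (Ω := Fin n → ℕ) (· ≤ ·) wellQuasiOrdered_le (fun c => b + φ c)
    (fun _ => AddMonoidHom.mrange φ) (fun _ => .of_fg hfg) ?_ ?_ ?_
  · intro c c' h
    obtain ⟨z, rfl⟩ := exists_add_of_le h
    exact ⟨φ z, ⟨z, rfl⟩, by rw [map_add, add_assoc]⟩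
  · rintro c _ ⟨z, rfl⟩
    exact ⟨φ (c + z), ⟨c + z, rfl⟩, by simp only [map_add, vadd_eq_add, add_assoc]⟩
  · rintro _ ⟨_, ⟨z, rfl⟩, rfl⟩
    exact ⟨z, rfl⟩

theorem image {X : Set N} (hX : IsTameSet X) (f : N →+ N') : IsTameSet (f '' X) := by
  obtain ⟨D⟩ := hX
  have := D.isPreorder
  refine of_presentation D.le D.wqo (fun x => f x) (fun x => (D.pumps x).map f)
    (fun x => (D.tame x).map f) ?_ ?_ ?_
  · intro x y h
    obtain ⟨w, hw, hy⟩ := D.exists_pump x y h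
    exact ⟨f w, AddSubmonoid.mem_map_of_mem f hw, by rw [hy, map_add]⟩
  · rintro x _ ⟨w, hw, rfl⟩
    exact ⟨x + w, D.pump_mem x w hw, map_add f _ _⟩
  · rintro _ ⟨x, hx, rfl⟩
    exact ⟨⟨x, hx⟩, rfl⟩

theorem inter {X : Set N} (hX : IsTameSet X) {U : AddSubmonoid N} (hU : IsLinearTrace U) :
    IsTameSet (X ∩ U) := by
  obtain ⟨D⟩ := hX
  have := D.isPreorder
  have : IsPreorder {x : X // (x : N) ∈ U} fun x y => D.le x y :=
    { refl := fun x => refl_of D.le x.1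
      trans := fun x y z => trans_of D.le }
  refine of_presentation (Ω := {x : X // (x : N) ∈ U}) (fun x y => D.le x y)
    (fun f => D.wqo fun n => f n) (fun x => x) (fun x => D.pumps x ⊓ U)
    (fun x => (D.tame x).inf hU) ?_ ?_ ?_
  · rintro ⟨x, hx⟩ ⟨y, hy⟩ h
    obtain ⟨w, hw, hxw⟩ := D.exists_pump x y h
    exact ⟨w, ⟨hw, hU.mem_of_add_mem x hx w (hxw ▸ hy)⟩, hxw⟩
  · rintro ⟨x, hx⟩ w ⟨hw, hwU⟩
    exact ⟨D.pump_mem x w hw, add_mem hx hwU⟩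
  · rintro x ⟨hx, hxU⟩
    exact ⟨⟨⟨x, hx⟩, hxU⟩, rfl⟩

theorem prod {X : Set N} {Y : Set N'} (hX : IsTameSet X) (hY : IsTameSet Y) :
    IsTameSet (X ×ˢ Y) := by
  obtain ⟨D⟩ := hX
  obtain ⟨D'⟩ := hY
  have := D.isPreorder
  have := D'.isPreorder
  have : IsPreorder (X × Y) fun a b => D.le a.1 b.1 ∧ D'.le a.2 b.2 :=
    { refl := fun a => ⟨refl_of D.le a.1, refl_of D'.le a.2⟩
      trans := fun a b c h h' => ⟨trans_of D.le h.1 h'.1, trans_of D'.le h.2 h'.2⟩ }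
  refine of_presentation (Ω := X × Y) (fun a b => D.le a.1 b.1 ∧ D'.le a.2 b.2)
    (D.wqo.prod D'.wqo) (fun a => (a.1, a.2)) (fun a => (D.pumps a.1).prod (D'.pumps a.2))
    (fun a => (D.tame _).prod (D'.tame _)) ?_ ?_ ?_
  · rintro a b ⟨h, h'⟩
    obtain ⟨w, hw, hb⟩ := D.exists_pump _ _ h
    obtain ⟨w', hw', hb'⟩ := D'.exists_pump _ _ h'
    exact ⟨(w, w'), ⟨hw, hw'⟩, by rw [hb, hb', Prod.mk_add_mk]⟩
  · rintro a ⟨w, w'⟩ ⟨hw, hw'⟩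
    exact ⟨D.pump_mem _ w hw, D'.pump_mem _ w' hw'⟩
  · rintro ⟨x, y⟩ ⟨hx, hy⟩
    exact ⟨(⟨x, hx⟩, ⟨y, hy⟩), rfl⟩

theorem iUnion {ι : Type*} [Finite ι] {X : ι → Set N} (hX : ∀ i, IsTameSet (X i)) :
    IsTameSet (⋃ i, X i) := by
  have D (i : ι) : PumpingOrder (X i) := (hX i).some
  have (i : ι) := (D i).isPreorder
  have : IsTrans ι emptyRelation := ⟨fun _ _ _ h => h.elim⟩
  have : IsPreorder (Σ i, X i) (Sigma.Lex emptyRelation fun i => (D i).le) :=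
    { refl := refl_of _
      trans := fun _ _ _ => trans_of _ }
  refine of_presentation _ (wellQuasiOrdered_sigmaLex fun i => (D i).wqo)
    (fun x => (x.2 : N)) (fun x => (D x.1).pumps x.2) (fun x => (D x.1).tame x.2) ?_ ?_ ?_
  · rintro _ _ (⟨_, _, h⟩ | ⟨x, y, h⟩)
    · exact h.elim
    · exact (D _).exists_pump x y h
  · rintro ⟨i, x⟩ w hw
    exact mem_iUnion_of_mem i ((D i).pump_mem x w hw)
  · intro x hx
    obtain ⟨i, hi⟩ := mem_iUnion.1 hx
    exact ⟨⟨i, x, hi⟩, rfl⟩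

theorem union {X Y : Set N} (hX : IsTameSet X) (hY : IsTameSet Y) : IsTameSet (X ∪ Y) := by
  rw [union_eq_iUnion]
  exact iUnion fun b => by cases b <;> assumption

theorem comp {A B C : Type*} [AddCommMonoid A] [AddCommMonoid B] [AddCommMonoid C] [IsCancelAdd B]
    [IsAddTorsionFree B] {X : SetRel A B} {Y : SetRel B C} (hX : IsTameSet X) (hY : IsTameSet Y) :
    IsTameSet (X ○ Y) :=
  comp_eq_image X Y ▸ ((hX.prod hY).inter (.eqLocusM _ _)).image
    ((AddMonoidHom.fst A B).prodMap (AddMonoidHom.snd B C))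

end IsTameSet

end Sets

/-! ### Walks in multigraphs -/

section Walks

variable {F F' V V' : Type*} {src tgt : F → V} {u v w : V} {l l' : List F}

/-- `IsWalk src tgt u l v` says that the list `l` of edges of the directed multigraph with endpoint
maps `src` and `tgt` is a walk from `u` to `v`. -/
def IsWalk (src tgt : F → V) : V → List F → V → Prop
  | u, [], v => u = v
  | u, f :: l, v => src f = u ∧ IsWalk src tgt (tgt f) l v

namespace IsWalk

theorem append (h : IsWalk src tgt u l v) (h' : IsWalk src tgt v l' w) :
    IsWalk src tgt u (l ++ l') w := by
  induction l generalizing u with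
  | nil => exact Eq.symm h ▸ h'
  | cons f l ih => exact ⟨h.1, ih h.2⟩

theorem map {src' tgt' : F' → V'} (φ : V → V') (f : F → F') (hsrc : ∀ e, src' (f e) = φ (src e))
    (htgt : ∀ e, tgt' (f e) = φ (tgt e)) (h : IsWalk src tgt u l v) :
    IsWalk src' tgt' (φ u) (l.map f) (φ v) := by
  induction l generalizing u with
  | nil => exact congrArg φ h
  | cons e l ih => exact ⟨(hsrc e).trans (congrArg φ h.1), htgt e ▸ ih h.2⟩

theorem flatMap {X : Type*} {L : List X} {f : X → List F}
    (h : ∀ x ∈ L, IsWalk src tgt u (f x) u) : IsWalk src tgt u (L.flatMap f) u := by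
  induction L with
  | nil => rfl
  | cons x L ih =>
    rw [List.forall_mem_cons] at h
    exact h.1.append (ih h.2)

theorem map_src_add_singleton (h : IsWalk src tgt u l v) :
    (l : Multiset F).map src + {v} = (l : Multiset F).map tgt + {u} := by
  induction l generalizing u with
  | nil => rw [show u = v from h, Multiset.coe_nil, Multiset.map_zero, Multiset.map_zero]
  | cons f l ih =>
    rw [← Multiset.cons_coe, Multiset.map_cons, Multiset.map_cons, Multiset.cons_add, ih h.2, h.1,
      ← Multiset.singleton_add, ← Multiset.singleton_add]
    abel

end IsWalk

theorem exists_isWalk_of_reflTransGen {r : V → V → Prop} (h : Relation.ReflTransGen r u v) :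
    ∃ l : List (V × V), IsWalk Prod.fst Prod.snd u l v ∧ ∀ p ∈ l,
      r p.1 p.2 ∧ Relation.ReflTransGen r u p.1 ∧ Relation.ReflTransGen r p.2 v := by
  induction h using Relation.ReflTransGen.head_induction_on with
  | refl => exact ⟨[], rfl, by simp only [List.not_mem_nil, IsEmpty.forall_iff, implies_true]⟩
  | @head u w huw hwv ih =>
    obtain ⟨l, hl, hmem⟩ := ih
    refine ⟨(u, w) :: l, ⟨rfl, hl⟩, List.forall_mem_cons.2 ⟨⟨huw, .refl, hwv⟩, fun p hp => ?_⟩⟩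
    obtain ⟨hp, hwp, hpv⟩ := hmem p hp
    exact ⟨hp, .head huw hwp, hpv⟩

theorem exists_isWalk_of_map_add_eq {m : Multiset F} (h : m.map src + {v} = m.map tgt + {u}) :
    ∃ l m', IsWalk src tgt u l v ∧ (l : Multiset F) + m' = m ∧ m'.map src = m'.map tgt := by
  induction m using Multiset.strongInductionOn generalizing u with
  | _ m ih =>
  by_cases huv : u = v
  · exact ⟨[], m, huv, zero_add m, by rwa [huv, add_left_inj] at h⟩
  have hu : u ∈ m.map src + {v} := h ▸ Multiset.mem_add.2 (.inr (Multiset.mem_singleton_self u))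
  obtain ⟨e, he, rfl⟩ : ∃ e ∈ m, src e = u := by
    simpa only [Multiset.mem_add, Multiset.mem_map, Multiset.mem_singleton, huv, or_false] using hu
  obtain ⟨m, rfl⟩ := Multiset.exists_cons_of_mem he
  obtain ⟨l, m', hl, rfl, hm'⟩ := ih m (Multiset.lt_cons_self m e) (u := tgt e) (by
    rw [Multiset.map_cons, Multiset.map_cons, ← Multiset.singleton_add,
      ← Multiset.singleton_add] at h
    refine add_left_cancel (a := {src e}) ?_
    rw [← add_assoc, h]
    abel)
  exact ⟨e :: l, m', ⟨rfl, hl⟩, by rw [← Multiset.cons_coe, Multiset.cons_add], hm'⟩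

theorem exists_sum_closed_walks_eq [Fintype F] {m : Multiset F} (h : m.map src = m.map tgt) :
    ∃ δ : F → List F, (∀ e, IsWalk src tgt (src e) (δ e) (src e)) ∧
      ∑ e, (δ e : Multiset F) = m := by
  classical
  induction m using Multiset.strongInductionOn with
  | _ m ih =>
  rcases m.empty_or_exists_mem with rfl | ⟨e, he⟩
  · exact ⟨fun _ => [], fun _ => rfl, by simp only [Multiset.coe_nil, Finset.sum_const_zero]⟩
  obtain ⟨m, rfl⟩ := Multiset.exists_cons_of_mem he
  obtain ⟨l, m', hl, rfl, hm'⟩ := exists_isWalk_of_map_add_eq (m := m) (src := src) (tgt := tgt)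
    (u := tgt e) (v := src e) (by
      rwa [Multiset.map_cons, Multiset.map_cons, ← Multiset.singleton_add,
        ← Multiset.singleton_add, add_comm, add_comm {tgt e}] at h)
  obtain ⟨δ, hδ, rfl⟩ := ih m' ((Multiset.le_add_left _ _).trans_lt (Multiset.lt_cons_self _ e)) hm'
  refine ⟨Function.update δ e (e :: l ++ δ e), fun e' => ?_, ?_⟩
  · rcases eq_or_ne e' e with rfl | hne
    · rw [Function.update_self]
      exact IsWalk.append ⟨rfl, hl⟩ (hδ e')
    · rw [Function.update_of_ne hne]
      exact hδ e'
  · rw [← Finset.add_sum_erase _ _ (Finset.mem_univ e), ← Finset.add_sum_erase _ (fun e => _)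
      (Finset.mem_univ e), Function.update_self, Finset.sum_congr rfl fun e' he' => by
        rw [Function.update_of_ne (Finset.ne_of_mem_erase he')]]
    simp only [← Multiset.coe_add, ← Multiset.cons_coe, ← Multiset.singleton_add, add_assoc]

end Walks

section Displacements

variable {A : Type*} [AddCommMonoid A]

/-- The pairs `(p, q)` of pairs with `p.2 - p.1 = q.2 - q.1`. -/
def sameDisplacement (A : Type*) [AddCommMonoid A] : AddSubmonoid ((A × A) × (A × A)) :=
  ((AddMonoidHom.snd A A).comp (.fst _ _) + (AddMonoidHom.fst A A).comp (.snd _ _)).eqLocusM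
    ((AddMonoidHom.fst A A).comp (.fst _ _) + (AddMonoidHom.snd A A).comp (.snd _ _))

theorem mem_sameDisplacement {p q : A × A} :
    (p, q) ∈ sameDisplacement A ↔ p.2 + q.1 = p.1 + q.2 := Iff.rfl

theorem isLinearTrace_sameDisplacement [IsCancelAdd A] [IsAddTorsionFree A] :
    IsLinearTrace (sameDisplacement A) := .eqLocusM _ _

theorem IsWalk.mem_sameDisplacement {x y : A} {l : List (A × A)}
    (h : IsWalk Prod.fst Prod.snd x l y) : ((x, y), l.sum) ∈ sameDisplacement A := by
  have := congrArg Multiset.sum h.map_src_add_singleton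
  simp only [Multiset.map_coe, Multiset.sum_add, Multiset.sum_coe, Multiset.sum_singleton] at this
  have hfst := map_list_sum (AddMonoidHom.fst A A) l
  have hsnd := map_list_sum (AddMonoidHom.snd A A) l
  simp only [AddMonoidHom.coe_fst, AddMonoidHom.coe_snd] at hfst hsnd
  rw [_root_.mem_sameDisplacement, hfst, hsnd, add_comm, this, add_comm]

theorem add_left_mem_sameDisplacement [IsCancelAdd A] {p q : A × A} (c : A) :
    ((c + p.1, c + p.2), q) ∈ sameDisplacement A ↔ (p, q) ∈ sameDisplacement A := by
  rw [mem_sameDisplacement, mem_sameDisplacement, add_assoc, add_assoc, add_right_inj]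

/-- The `x` for which some pair of `U` factors as `(r, x)` followed by `(x, s)` in `L`. -/
def intermediates (L U : AddSubmonoid (A × A)) : AddSubmonoid A where
  carrier := {x | ∃ r s, (r, x) ∈ L ∧ (x, s) ∈ L ∧ (r, s) ∈ U}
  zero_mem' := ⟨0, 0, zero_mem L, zero_mem L, zero_mem U⟩
  add_mem' := by
    rintro x x' ⟨r, s, hr, hs, hU⟩ ⟨r', s', hr', hs', hU'⟩
    exact ⟨r + r', s + s', add_mem hr hr', add_mem hs hs', add_mem hU hU'⟩

theorem DenseIn.of_pumping {N N' : Type*} [AddCommMonoid N] [AddCommMonoid N']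
    {W : AddSubmonoid N'} {D C : AddSubmonoid N} {f : N →+ N'} {p : N'} (h : DenseIn D C)
    (hW : W ≤ D.map f) (hp : p ∈ W)
    (hpump : ∀ d ∈ D, ∃ k : ℕ, ∀ n : ℕ, k • p + n • (p + f d) ∈ W) : DenseIn W (C.map f) where
  le := hW.trans (AddSubmonoid.monotone_map h.le)
  exists_offset := by
    obtain ⟨d₀, hd₀, hC⟩ := h.exists_offset
    obtain ⟨k₀, hk₀⟩ := hpump d₀ hd₀
    refine ⟨(k₀ + 2) • p + f d₀, ?_, ?_⟩
    · convert add_mem (hk₀ 1) hp using 1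
      rw [add_smul, two_smul, one_smul]
      abel
    rintro _ ⟨c, hc, rfl⟩
    obtain ⟨m, hm, hmc⟩ := hC c hc
    obtain ⟨k, hk⟩ := hpump _ hmc
    obtain ⟨j, hj⟩ : ∃ j, (k + 1) * m * (k₀ + 2) = k + (k + 1) + j := by
      refine exists_add_of_le ?_
      nlinarith [Nat.mul_le_mul (Nat.mul_le_mul_left (k + 1) (Nat.one_le_iff_ne_zero.2 hm))
        (Nat.le_add_left 2 k₀)]
    refine ⟨(k + 1) * m, mul_ne_zero k.succ_ne_zero hm, ?_⟩
    have hmul : ((k + 1) * m) • (f c + ((k₀ + 2) • p + f d₀)) =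
        k • p + (k + 1) • (p + f (m • (c + d₀))) + j • p := by
      rw [show f c + ((k₀ + 2) • p + f d₀) = (k₀ + 2) • p + f (c + d₀) by rw [map_add]; abel,
        smul_add, smul_smul, hj, map_nsmul, smul_add, smul_smul, add_smul, add_smul]
      abel
    rw [hmul]
    exact add_mem (hk _) (nsmul_mem hp j)

end Displacements

section Flows

variable {E N : Type*} [Fintype E] [AddCommMonoid N]

/-- The multiset in which `e` occurs `(d e).1` times. -/
def multiplicities : (E → ℕ × N) →+ Multiset E where
  toFun d := ∑ e, (d e).1 • {e}
  map_zero' := by simp only [Pi.zero_apply, Prod.fst_zero, zero_smul, Finset.sum_const_zero]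
  map_add' d d' := by
    simp only [Pi.add_apply, Prod.fst_add, add_smul, Finset.sum_add_distrib]

/-- The sum of a family of points of the sets `base e + N` in which the `e`-th set occurs `(d e).1`
times, with total pumping `(d e).2`. -/
def flowTotal (base : E → N) : (E → ℕ × N) →+ N where
  toFun d := ((multiplicities d).map base).sum + ∑ e, (d e).2
  map_zero' := by
    simp only [map_zero, Multiset.map_zero, Multiset.sum_zero, Pi.zero_apply, Prod.snd_zero,
      Finset.sum_const_zero, add_zero]
  map_add' d d' := by
    simp only [map_add, Multiset.map_add, Multiset.sum_add, Pi.add_apply, Prod.snd_add,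
      Finset.sum_add_distrib, add_add_add_comm]

theorem flowTotal_apply (base : E → N) (d : E → ℕ × N) :
    flowTotal base d = ((multiplicities d).map base).sum + ∑ e, (d e).2 := rfl

theorem multiplicities_single [DecidableEq E] (e : E) (w : N) :
    multiplicities (Pi.single e (1, w)) = {e} := by
  refine (Finset.sum_eq_single e (fun b _ hb => ?_) (fun he => (he (Finset.mem_univ e)).elim)).trans
    ?_
  · rw [Pi.single_eq_of_ne hb, Prod.fst_zero, zero_smul]
  · rw [Pi.single_eq_same, one_smul]

theorem flowTotal_single [DecidableEq E] (base : E → N) (e : E) (w : N) :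
    flowTotal base (Pi.single e (1, w)) = base e + w := by
  rw [flowTotal_apply, multiplicities_single, Multiset.map_singleton, Multiset.sum_singleton,
    Finset.sum_eq_single e (fun b _ hb => by rw [Pi.single_eq_of_ne hb, Prod.snd_zero])
      (fun he => (he (Finset.mem_univ e)).elim), Pi.single_eq_same]

theorem exists_parikh {P : E → AddSubmonoid N} {base : E → N} {l : List N}
    (hl : ∀ p ∈ l, ∃ e, ∃ w ∈ P e, base e + w = p) :
    ∃ d : E → ℕ × N, (∀ e, (d e).2 ∈ P e) ∧ flowTotal base d = l.sum ∧
      ∀ {X : Type _} (f : N → X), (∀ e, ∀ w ∈ P e, f (base e + w) = f (base e)) →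
        (multiplicities d).map (f ∘ base) = (l : Multiset N).map f := by
  classical
  induction l with
  | nil =>
    exact ⟨0, fun e => zero_mem _, map_zero _, fun f _ => by rw [map_zero]; rfl⟩
  | cons p l ih =>
    rw [List.forall_mem_cons] at hl
    obtain ⟨e, w, hw, rfl⟩ := hl.1
    obtain ⟨d, hd, htotal, hmult⟩ := ih hl.2
    refine ⟨Pi.single e (1, w) + d, fun b => add_mem ?_ (hd b), ?_, fun f hf => ?_⟩
    · obtain rfl | hb := eq_or_ne b e
      · rwa [Pi.single_eq_same]
      · rw [Pi.single_eq_of_ne hb]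
        exact zero_mem _
    · rw [map_add, htotal, List.sum_cons, flowTotal_single]
    · rw [map_add, multiplicities_single, Multiset.map_add, hmult f hf, Multiset.map_singleton,
        Function.comp_apply, ← hf e w hw, ← Multiset.cons_coe, Multiset.map_cons,
        Multiset.singleton_add]

theorem exists_isWalk_sum_eq_flowTotal {V : Type*} {src tgt : N → V} {u : V} {base : E → N}
    {α β : E → List N} {d : E → ℕ × N} (hα : ∀ e, IsWalk src tgt u (α e) (src (base e)))
    (hβ : ∀ e, IsWalk src tgt (tgt (base e)) (β e) u)
    (hsrc : ∀ e, src (base e + (d e).2) = src (base e))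
    (htgt : ∀ e, tgt (base e + (d e).2) = tgt (base e))
    (hbal : (multiplicities d).map (src ∘ base) = (multiplicities d).map (tgt ∘ base)) :
    ∃ l : List N, IsWalk src tgt u l u ∧
      l.sum = ∑ e, ((α e).sum + (base e + (β e).sum)) + flowTotal base d ∧
      ∀ p ∈ l, ∃ e, p ∈ α e ∨ p = base e ∨ p = base e + (d e).2 ∨ p ∈ β e := by
  obtain ⟨δ, hδ, hsum⟩ := exists_sum_closed_walks_eq hbal
  refine ⟨Finset.univ.toList.flatMap fun e =>
    α e ++ ((δ e).map base ++ (base e + (d e).2) :: β e), .flatMap fun e _ => ?_, ?_, ?_⟩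
  · exact (hα e).append ((IsWalk.map (src' := src) (tgt' := tgt) id base (fun _ => rfl)
      (fun _ => rfl) (hδ e)).append ⟨hsrc e, (htgt e).symm ▸ hβ e⟩)
  · have hcycles : ∑ e, ((δ e).map base).sum = ((multiplicities d).map base).sum := by
      rw [← hsum, ← Multiset.coe_mapAddMonoidHom, map_sum, ← Multiset.coe_sumAddMonoidHom, map_sum]
      rfl
    rw [flowTotal_apply, ← hcycles, ← Finset.sum_add_distrib, ← Finset.sum_add_distrib]
    simp only [List.flatMap, List.sum_flatten, List.map_map, Function.comp_def, List.sum_append,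
      List.sum_cons, Finset.sum_map_toList]
    refine Finset.sum_congr rfl fun e _ => ?_
    abel
  · simp only [List.mem_flatMap, List.mem_append, List.mem_map, List.mem_cons]
    rintro p ⟨e, -, h | ⟨e', -, rfl⟩ | h | h⟩
    exacts [⟨e, .inl h⟩, ⟨e', .inr (.inl rfl)⟩, ⟨e, .inr (.inr (.inl h))⟩,
      ⟨e, .inr (.inr (.inr h))⟩]

end Flows

section MonotoneRelations

variable {ι : Type*} {J : Set ι} {T : SetRel (ι → ℕ) (ι → ℕ)}

/-- The vectors that vanish at the coordinates in `J`. -/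
def zeroOn (J : Set ι) : AddSubmonoid (ι → ℕ) where
  carrier := {z | ∀ j ∈ J, z j = 0}
  zero_mem' _ _ := rfl
  add_mem' hx hy j hj := by rw [Pi.add_apply, hx j hj, hy j hj]

theorem isLinearTrace_zeroOn (J : Set ι) : IsLinearTrace (zeroOn J) where
  mem_of_add_mem _ _ _ hxy j hj := (Nat.add_eq_zero_iff.1 (hxy j hj)).2
  mem_of_nsmul_mem _ hk _ hx j hj := (mul_eq_zero.1 (hx j hj)).resolve_left hk

theorem mem_zeroOn_of_le {x y : ι → ℕ} (h : x ≤ y) (hy : y ∈ zeroOn J) : x ∈ zeroOn J :=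
  fun j hj => Nat.eq_zero_of_le_zero ((h j).trans (hy j hj).le)

theorem domRestrict_add_eq_iff {y z : ι → ℕ} :
    J.domRestrict (y + z) = J.domRestrict y ↔ z ∈ zeroOn J := by
  rw [domRestrict_eq_domRestrict_iff]
  exact forall₂_congr fun j _ => add_eq_left

theorem exists_mem_le_zeroOn_support_compl [Finite ι] (P : AddSubmonoid (ι → ℕ)) :
    ∃ x ∈ P, P ≤ zeroOn (Function.support x)ᶜ := by
  classical
  have := Fintype.ofFinite ι
  have (i : ι) : ∃ x ∈ P, ∀ y ∈ P, y i ≠ 0 → x i ≠ 0 := by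
    by_cases h : ∃ x ∈ P, x i ≠ 0
    · obtain ⟨x, hx, hxi⟩ := h
      exact ⟨x, hx, fun _ _ _ => hxi⟩
    · exact ⟨0, zero_mem P, fun y hy hyi => (h ⟨y, hy, hyi⟩).elim⟩
  choose x hx hmax using this
  refine ⟨∑ i, x i, sum_mem fun i _ => hx i, fun y hy i hi => ?_⟩
  by_contra hyi
  rw [mem_compl_iff, Function.notMem_support, Finset.sum_apply, Finset.sum_eq_zero_iff] at hi
  exact hmax i y hy hyi (hi i (Finset.mem_univ i))

theorem exists_forall_le_nsmul [Finite ι] (k x : ι → ℕ) :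
    ∃ n : ℕ, ∀ i ∈ Function.support x, k i ≤ (n • x) i := by
  obtain ⟨n, hn⟩ := (finite_range k).bddAbove
  exact ⟨n, fun i hi => (hn (mem_range_self i)).trans
    (Nat.le_mul_of_pos_right n (Nat.pos_of_ne_zero hi))⟩

/-- The reachability relation of `T`. -/
abbrev Reaches {A : Type*} (T : SetRel A A) : A → A → Prop := Relation.ReflTransGen (· ~[T] ·)

/-- A relation on the vectors vanishing on `J` that is stable under adding such a vector to both
sides. -/
structure IsTranslationStable (J : Set ι) (T : SetRel (ι → ℕ) (ι → ℕ)) : Prop where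
  mem_prod : ∀ p ∈ T, p ∈ (zeroOn J).prod (zeroOn J)
  add_diag_mem : ∀ p ∈ T, ∀ z ∈ zeroOn J, p + (z, z) ∈ T

namespace IsTranslationStable

theorem reaches_add (hT : IsTranslationStable J T) {x y z : ι → ℕ} (h : Reaches T x y)
    (hz : z ∈ zeroOn J) : Reaches T (x + z) (y + z) :=
  h.lift (· + z) fun _ _ hab => hT.add_diag_mem _ hab z hz

theorem mem_zeroOn_of_reaches (hT : IsTranslationStable J T) {x y : ι → ℕ} (h : Reaches T x y)
    (hx : x ∈ zeroOn J) : y ∈ zeroOn J := by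
  cases h with
  | refl => exact hx
  | tail _ h => exact (hT.mem_prod _ h).2

/-- The transformer relation of `c`: the pairs `(r, s)` with `c + r` reaching `c + s`. -/
def transformers (hT : IsTranslationStable J T) (c : ι → ℕ) :
    AddSubmonoid ((ι → ℕ) × (ι → ℕ)) where
  carrier := {p | p ∈ (zeroOn J).prod (zeroOn J) ∧ Reaches T (c + p.1) (c + p.2)}
  zero_mem' := ⟨zero_mem _, .refl⟩
  add_mem' := by
    rintro ⟨r, s⟩ ⟨r', s'⟩ ⟨h, hrs⟩ ⟨h', hrs'⟩
    have hfirst := hT.reaches_add hrs h'.1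
    have hsecond := hT.reaches_add hrs' h.2
    rw [add_right_comm c s' s] at hsecond
    rw [add_right_comm] at hsecond
    simp only [add_assoc] at hfirst hsecond
    exact ⟨add_mem h h', hfirst.trans hsecond⟩

end IsTranslationStable
end MonotoneRelations

/-! ### Transformer relations -/

section Transformers

variable {ι : Type*} {J H : Set ι} {T : SetRel (ι → ℕ) (ι → ℕ)} {c : ι → ℕ}
  {U W : AddSubmonoid ((ι → ℕ) × (ι → ℕ))}

/-- The linear conditions saying that the base points and pumping vectors counted in `x.1` are the
steps of a closed walk, after projection to the coordinates in `H`, and that these steps have the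
displacement `x.2`. -/
def flowEquations {E : Type*} [Fintype E] (H : Set ι) (base : E → (ι → ℕ) × (ι → ℕ)) :
    AddSubmonoid ((E → ℕ × ((ι → ℕ) × (ι → ℕ))) × ((ι → ℕ) × (ι → ℕ))) :=
  (((Multiset.mapAddMonoidHom (H.domRestrict ∘ Prod.fst ∘ base)).comp
      (multiplicities.comp (.fst _ _))).eqLocusM
    ((Multiset.mapAddMonoidHom (H.domRestrict ∘ Prod.snd ∘ base)).comp
      (multiplicities.comp (.fst _ _)))) ⊓
  (sameDisplacement (ι → ℕ)).comap ((AddMonoidHom.snd _ _).prod ((flowTotal base).comp (.fst _ _)))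

theorem isLinearTrace_flowEquations {E : Type*} [Fintype E]
    (base : E → (ι → ℕ) × (ι → ℕ)) : IsLinearTrace (flowEquations H base) :=
  .inf (.eqLocusM _ _) (isLinearTrace_sameDisplacement.comap _)

/-- The solutions of `flowEquations H base` with pumping vectors in `P` and displacement in `V`. -/
def flows {E : Type*} [Fintype E] (H : Set ι) (base : E → (ι → ℕ) × (ι → ℕ))
    (P : E → AddSubmonoid ((ι → ℕ) × (ι → ℕ))) (V : AddSubmonoid ((ι → ℕ) × (ι → ℕ))) :
    AddSubmonoid ((E → ℕ × ((ι → ℕ) × (ι → ℕ))) × ((ι → ℕ) × (ι → ℕ))) :=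
  ((AddSubmonoid.pi univ fun e => (⊤ : AddSubmonoid ℕ).prod (P e)).prod V) ⊓ flowEquations H base

theorem isTameSubmonoid_flows {E : Type*} [Fintype E] {base : E → (ι → ℕ) × (ι → ℕ)}
    {P : E → AddSubmonoid ((ι → ℕ) × (ι → ℕ))} {V : AddSubmonoid ((ι → ℕ) × (ι → ℕ))}
    (hP : ∀ e, IsTameSubmonoid (P e)) (hV : IsTameSubmonoid V) :
    IsTameSubmonoid (flows H base P V) :=
  ((IsTameSubmonoid.pi fun e => (IsTameSubmonoid.of_fg AddMonoid.FG.fg_top).prod (hP e)).prod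
    hV).inf (isLinearTrace_flowEquations base)

namespace IsTranslationStable

theorem fst_mem_intermediates (hT : IsTranslationStable J T) {q : (ι → ℕ) × (ι → ℕ)}
    (hq : q ∈ hT.transformers c ⊓ U) : q.1 ∈ intermediates (hT.transformers c) U :=
  ⟨q.1, q.2, ⟨⟨hq.1.1.1, hq.1.1.1⟩, .refl⟩, hq.1, hq.2⟩

theorem snd_mem_intermediates (hT : IsTranslationStable J T) {q : (ι → ℕ) × (ι → ℕ)}
    (hq : q ∈ hT.transformers c ⊓ U) : q.2 ∈ intermediates (hT.transformers c) U :=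
  ⟨q.1, q.2, hq.1, ⟨⟨hq.1.1.2, hq.1.1.2⟩, .refl⟩, hq.2⟩

theorem nsmul_add_nsmul_mem (hT : IsTranslationStable J T) {r x s : ι → ℕ}
    (hrx : (r, x) ∈ hT.transformers c) (hxs : (x, s) ∈ hT.transformers c) (hU : (r, s) ∈ U)
    {k : ℕ} {q : (ι → ℕ) × (ι → ℕ)} (hq : q ∈ hT.transformers (c + k • x) ⊓ U) (n : ℕ) :
    k • (r, s) + n • q ∈ hT.transformers c ⊓ U := by
  obtain ⟨hnq, hnU⟩ := nsmul_mem hq n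
  have hkrx := nsmul_mem hrx k
  have hkxs := nsmul_mem hxs k
  refine ⟨⟨⟨add_mem hkrx.1.1 hnq.1.1, add_mem hkxs.1.2 hnq.1.2⟩, ?_⟩,
    add_mem (nsmul_mem hU k) hnU⟩
  have hfirst := hT.reaches_add hkrx.2 hnq.1.1
  have hlast := hT.reaches_add hkxs.2 hnq.1.2
  simp only [add_assoc] at hfirst hlast
  have hmid := hnq.2
  simp only [add_assoc] at hmid
  exact hfirst.trans (hmid.trans hlast)

theorem exists_forall_reaches_of_isWalk (hT : IsTranslationStable J T)
    {l : List ((ι → ℕ) × (ι → ℕ))} (hl : ∀ p ∈ l, p ∈ T) {u v : H → ℕ}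
    (h : IsWalk (H.domRestrict ∘ Prod.fst) (H.domRestrict ∘ Prod.snd) u l v) :
    ∃ k : ι → ℕ, ∀ y ∈ zeroOn J, H.domRestrict y = u → (∀ i ∉ H, k i ≤ y i) →
      ∀ y', ((y, y'), l.sum) ∈ sameDisplacement (ι → ℕ) → Reaches T y y' := by
  induction l generalizing u with
  | nil =>
    refine ⟨0, fun y _ _ _ y' hy' => ?_⟩
    rw [show y' = y from hy']
  | cons p l ih =>
    rw [List.forall_mem_cons] at hl
    obtain ⟨k, hk⟩ := ih hl.2 h.2
    refine ⟨p.1 + k, fun y hyJ hyu hky y' hy' => ?_⟩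
    have hyp : H.domRestrict y = H.domRestrict p.1 := hyu.trans h.1.symm
    have hle : p.1 ≤ y := fun i => by
      by_cases hi : i ∈ H
      · exact (congrFun hyp ⟨i, hi⟩).ge
      · exact (Nat.le_add_right _ _).trans (hky i hi)
    obtain ⟨z, rfl⟩ := exists_add_of_le hle
    have hz : z ∈ zeroOn J := mem_zeroOn_of_le le_add_self hyJ
    have hstep := hT.add_diag_mem p hl.1 z hz
    refine .head hstep (hk _ (hT.mem_prod _ hstep).2 ?_ (fun i hi => ?_) y' ?_)
    · exact domRestrict_add_eq_iff.2 (domRestrict_add_eq_iff.1 hyp)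
    · have := hky i hi
      simp only [Pi.add_apply, Prod.snd_add] at this ⊢
      omega
    · rw [mem_sameDisplacement] at hy' ⊢
      simp only [List.sum_cons, Prod.fst_add, Prod.snd_add] at hy' ⊢
      refine add_left_cancel (a := p.1) ?_
      rw [add_left_comm, hy']
      abel

/-- The pairs `(y, y')` occurring in this order on runs from `c + r` to `c + s` with
`(r, s) ∈ W`. -/
def IsBetween (T : SetRel (ι → ℕ) (ι → ℕ)) (c : ι → ℕ) (W : AddSubmonoid ((ι → ℕ) × (ι → ℕ)))
    (y y' : ι → ℕ) : Prop :=
  ∃ q ∈ W, Reaches T (c + q.1) y ∧ Reaches T y' (c + q.2)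

theorem mem_zeroOn_of_isBetween (hT : IsTranslationStable J T) (hc : c ∈ zeroOn J)
    (hH : intermediates (hT.transformers c) U ≤ zeroOn H) {y z : ι → ℕ}
    (hy : IsBetween T c (hT.transformers c ⊓ U) y y)
    (hyz : IsBetween T c (hT.transformers c ⊓ U) (y + z) (y + z)) : z ∈ zeroOn H := by
  obtain ⟨⟨r, s⟩, ⟨⟨⟨hr, hs⟩, -⟩, hU⟩, hry, hys⟩ := hy
  obtain ⟨⟨r', s'⟩, ⟨⟨⟨hr', hs'⟩, -⟩, hU'⟩, hry', hys'⟩ := hyz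
  dsimp only at *
  have hz : z ∈ zeroOn J :=
    mem_zeroOn_of_le le_add_self (hT.mem_zeroOn_of_reaches hry' (add_mem hc hr'))
  have hx : s + z + r ∈ intermediates (hT.transformers c) U := by
    refine ⟨r' + r, s' + s, ⟨⟨add_mem hr' hr, add_mem (add_mem hs hz) hr⟩, ?_⟩,
      ⟨⟨add_mem (add_mem hs hz) hr, add_mem hs' hs⟩, ?_⟩, add_mem hU' hU⟩
    · have := hT.reaches_add (hry'.trans (hT.reaches_add hys hz)) hr
      simpa only [add_assoc] using this
    · have := hT.reaches_add ((hT.reaches_add hry hz).trans hys') hs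
      rw [show c + r + z + s = c + (s + z + r) by abel] at this
      simpa only [add_assoc] using this
  exact mem_zeroOn_of_le (le_add_self.trans le_self_add) (hH hx)

section Cover

variable {E : Type*} [Fintype E] {base : E → (ι → ℕ) × (ι → ℕ)}
  {P : E → AddSubmonoid ((ι → ℕ) × (ι → ℕ))}

theorem transformers_inf_le_map_flows (hT : IsTranslationStable J T)
    {V : AddSubmonoid ((ι → ℕ) × (ι → ℕ))} (hV : hT.transformers c ⊓ U ≤ V)
    (hH : hT.transformers c ⊓ U ≤ (zeroOn H).prod (zeroOn H))
    (hP : ∀ e, P e ≤ (zeroOn H).prod (zeroOn H))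
    (hcover : ∀ p ∈ T, IsBetween T c (hT.transformers c ⊓ U) p.1 p.2 →
      ∃ e, ∃ w ∈ P e, base e + w = p) :
    hT.transformers c ⊓ U ≤ (flows H base P V).map (AddMonoidHom.snd _ _) := by
  intro q hq
  obtain ⟨l, hwalk, hl⟩ := exists_isWalk_of_reflTransGen hq.1.2
  obtain ⟨d, hd, htotal, hmult⟩ := exists_parikh fun p hp =>
    hcover p (hl p hp).1 ⟨q, hq, (hl p hp).2⟩
  refine ⟨(d, q), ⟨⟨fun e _ => ⟨trivial, hd e⟩, hV hq⟩, ?_, ?_⟩, rfl⟩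
  · have hclosed := (hwalk.map (src' := H.domRestrict ∘ Prod.fst) (tgt' := H.domRestrict ∘ Prod.snd)
      H.domRestrict id (fun _ => rfl) fun _ => rfl).map_src_add_singleton
    rw [List.map_id, domRestrict_add_eq_iff.2 (hH hq).1, domRestrict_add_eq_iff.2 (hH hq).2,
      add_left_inj, ← hmult _ fun e w hw => domRestrict_add_eq_iff.2 (hP e hw).1,
      ← hmult _ fun e w hw => domRestrict_add_eq_iff.2 (hP e hw).2] at hclosed
    exact hclosed
  · change (q, flowTotal base d) ∈ sameDisplacement (ι → ℕ)
    rw [htotal]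
    exact (add_left_mem_sameDisplacement c).1 hwalk.mem_sameDisplacement

theorem exists_excursion (hW : W ≤ (zeroOn H).prod (zeroOn H)) {p : (ι → ℕ) × (ι → ℕ)}
    (hp : IsBetween T c W p.1 p.2) :
    ∃ ρ ∈ W, ∃ α β : List ((ι → ℕ) × (ι → ℕ)), (∀ q ∈ α, q ∈ T) ∧ (∀ q ∈ β, q ∈ T) ∧
      IsWalk (H.domRestrict ∘ Prod.fst) (H.domRestrict ∘ Prod.snd) (H.domRestrict c) α
        (H.domRestrict p.1) ∧
      IsWalk (H.domRestrict ∘ Prod.fst) (H.domRestrict ∘ Prod.snd) (H.domRestrict p.2) β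
        (H.domRestrict c) ∧
      (ρ, α.sum + (p + β.sum)) ∈ sameDisplacement (ι → ℕ) := by
  obtain ⟨ρ, hρ, hα, hβ⟩ := hp
  obtain ⟨α, hαwalk, hα⟩ := exists_isWalk_of_reflTransGen hα
  obtain ⟨β, hβwalk, hβ⟩ := exists_isWalk_of_reflTransGen hβ
  have hproj {l : List ((ι → ℕ) × (ι → ℕ))} {y y' : ι → ℕ} (h : IsWalk Prod.fst Prod.snd y l y') :
      IsWalk (H.domRestrict ∘ Prod.fst) (H.domRestrict ∘ Prod.snd) (H.domRestrict y) l
        (H.domRestrict y') := by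
    simpa only [List.map_id] using h.map (src' := H.domRestrict ∘ Prod.fst)
      (tgt' := H.domRestrict ∘ Prod.snd) H.domRestrict id (fun _ => rfl) fun _ => rfl
  refine ⟨ρ, hρ, α, β, fun q hq => (hα q hq).1, fun q hq => (hβ q hq).1, ?_, ?_, ?_⟩
  · simpa only [domRestrict_add_eq_iff.2 (hW hρ).1] using hproj hαwalk
  · simpa only [domRestrict_add_eq_iff.2 (hW hρ).2] using hproj hβwalk
  · have := (hαwalk.append (l' := p :: β) ⟨rfl, hβwalk⟩).mem_sameDisplacement
    rw [List.sum_append, List.sum_cons] at this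
    exact (add_left_mem_sameDisplacement c).1 this

theorem exists_forall_add_mem_transformers (hT : IsTranslationStable J T) (hc : c ∈ zeroOn J)
    {V : AddSubmonoid ((ι → ℕ) × (ι → ℕ))}
    (hW : W ≤ (zeroOn J ⊓ zeroOn H).prod (zeroOn J ⊓ zeroOn H))
    (hV : V ≤ (zeroOn J ⊓ zeroOn H).prod (zeroOn J ⊓ zeroOn H))
    (hP : ∀ e, P e ≤ (zeroOn H).prod (zeroOn H))
    (hbase : ∀ e, ∀ w ∈ P e, base e + w ∈ T)
    (hbetween : ∀ e, IsBetween T c W (base e).1 (base e).2) :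
    ∃ ρ ∈ W, ∀ x ∈ flows H base P V, ∃ k : ι → ℕ, ∀ z ∈ zeroOn J ⊓ zeroOn H,
      (∀ i ∉ H, k i ≤ z i) → ρ + x.2 ∈ hT.transformers (c + z) := by
  choose ρ hρ α β hα hβ hαwalk hβwalk hdisp using fun e =>
    exists_excursion (fun q hq => ⟨(hW hq).1.2, (hW hq).2.2⟩) (hbetween e)
  have hρW : ∑ e, ρ e ∈ W := sum_mem fun e _ => hρ e
  refine ⟨∑ e, ρ e, hρW, ?_⟩
  rintro ⟨d, q⟩ ⟨⟨hd, hq⟩, hbal, hdq⟩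
  obtain ⟨l, hl, hsum, hmem⟩ := exists_isWalk_sum_eq_flowTotal hαwalk hβwalk
    (fun e => domRestrict_add_eq_iff.2 (hP e (hd e trivial).2).1)
    (fun e => domRestrict_add_eq_iff.2 (hP e (hd e trivial).2).2) hbal
  have hlT : ∀ p ∈ l, p ∈ T := fun p hp => by
    obtain ⟨e, h | rfl | rfl | h⟩ := hmem p hp
    exacts [hα e p h, add_zero (base e) ▸ hbase e 0 (zero_mem _), hbase e _ (hd e trivial).2,
      hβ e p h]
  obtain ⟨k, hk⟩ := hT.exists_forall_reaches_of_isWalk hlT hl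
  have hρq := add_mem (hW hρW) (hV hq)
  refine ⟨k, fun z hz hkz => ⟨⟨hρq.1.1, hρq.2.1⟩, hk _ (add_mem (add_mem hc hz.1) hρq.1.1) ?_
    (fun i hi => ?_) _ ?_⟩⟩
  · rw [domRestrict_add_eq_iff.2 hρq.1.2, domRestrict_add_eq_iff.2 hz.2]
  · simp only [Pi.add_apply]
    have := hkz i hi
    omega
  · rw [add_left_mem_sameDisplacement, hsum]
    have hexc : (∑ e, ρ e, ∑ e, ((α e).sum + (base e + (β e).sum))) ∈ sameDisplacement (ι → ℕ) := by
      rw [prod_mk_sum]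
      exact sum_mem fun e _ => hdisp e
    exact add_mem hexc hdq

end Cover

theorem mem_prod_zeroOn_of_isBetween (hT : IsTranslationStable J T) (hc : c ∈ zeroOn J)
    (hH : intermediates (hT.transformers c) U ≤ zeroOn H) {p w : (ι → ℕ) × (ι → ℕ)}
    (hp : p ∈ T) (hbetween : IsBetween T c (hT.transformers c ⊓ U) p.1 p.2) (hpw : p + w ∈ T)
    (hbetween' : IsBetween T c (hT.transformers c ⊓ U) (p + w).1 (p + w).2) :
    w ∈ (zeroOn H).prod (zeroOn H) := by
  obtain ⟨q, hq, hleft, hright⟩ := hbetween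
  obtain ⟨q', hq', hleft', hright'⟩ := hbetween'
  exact ⟨hT.mem_zeroOn_of_isBetween hc hH ⟨q, hq, hleft, .head hp hright⟩
      ⟨q', hq', hleft', .head hpw hright'⟩,
    hT.mem_zeroOn_of_isBetween hc hH ⟨q, hq, hleft.tail hp, hright⟩
      ⟨q', hq', hleft'.tail hpw, hright'⟩⟩

theorem isTameSubmonoid_transformers [Finite ι] (hT : IsTranslationStable J T) (hc : c ∈ zeroOn J)
    (hTame : IsTameSet T) : IsTameSubmonoid (hT.transformers c) := fun U hU => by
  -- `x` has maximal support among the intermediates: adding multiples of it makes the coordinates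
  -- outside `H` as large as needed, while all intermediates vanish on `H`.
  obtain ⟨x, ⟨r, s, hrx, hxs, hrs⟩, hx⟩ :=
    exists_mem_le_zeroOn_support_compl (intermediates (hT.transformers c) U)
  set H := (Function.support x)ᶜ
  let V := U ⊓ (zeroOn J ⊓ zeroOn H).prod (zeroOn J ⊓ zeroOn H)
  have hWV : hT.transformers c ⊓ U ≤ V := fun q hq => ⟨hq.2,
    ⟨hq.1.1.1, hx (hT.fst_mem_intermediates hq)⟩, hq.1.1.2, hx (hT.snd_mem_intermediates hq)⟩
  have hJH := (isLinearTrace_zeroOn J).inf (isLinearTrace_zeroOn H)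
  have hV : IsTameSubmonoid V := by
    have := IsTameSubmonoid.of_fg (N := (ι → ℕ) × (ι → ℕ)) AddMonoid.FG.fg_top
    simpa only [top_inf_eq] using this.inf (hU.inf (hJH.prod hJH))
  obtain ⟨F, P, hP, hPH, hbase, hcover⟩ := hTame.exists_cover
    (O := {p ∈ T | IsBetween T c (hT.transformers c ⊓ U) p.1 p.2}) (sep_subset _ _)
    ((isLinearTrace_zeroOn H).prod (isLinearTrace_zeroOn H)) fun p w hp hpw =>
      hT.mem_prod_zeroOn_of_isBetween hc hx hp.1 hp.2 hpw.1 hpw.2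
  obtain ⟨ρ, hρ, hρV⟩ := hT.exists_forall_add_mem_transformers hc (fun q hq => (hWV hq).2)
    inf_le_right (V := V) (E := F) (fun e => hPH e) (fun e => hbase e) fun e => e.1.2.2
  obtain ⟨C, hC, hDC⟩ :=
    (isTameSubmonoid_flows (base := fun e : F => e) (fun e => hP e) hV).nearlyFG
  have hrsW : (r, s) ∈ hT.transformers c ⊓ U := ⟨⟨⟨hrx.1.1, hxs.1.2⟩, hrx.2.trans hxs.2⟩, hrs⟩
  refine ⟨C.map (AddMonoidHom.snd _ _), hC.map _, hDC.of_pumping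
    (hT.transformers_inf_le_map_flows hWV (fun q hq => ⟨(hWV hq).2.1.2, (hWV hq).2.2.2⟩)
      (fun e => hPH e) fun p hp hb => ?_) (add_mem hrsW hρ) fun d hd => ?_⟩
  · obtain ⟨b, hb, hw⟩ := hcover p ⟨hp, hb⟩
    exact ⟨⟨b, hb⟩, hw⟩
  obtain ⟨k, hk⟩ := hρV d hd
  obtain ⟨m, hm⟩ := exists_forall_le_nsmul k x
  have hxH : x ∈ zeroOn H := fun i hi => Function.notMem_support.1 hi
  have hρd : ρ + d.2 ∈ hT.transformers (c + m • x) ⊓ U :=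
    ⟨hk _ (nsmul_mem (⟨hrx.1.2, hxH⟩ : x ∈ zeroOn J ⊓ zeroOn H) m)
      fun i hi => hm i (not_not.1 hi), add_mem hρ.2 hd.1.2.1⟩
  refine ⟨m, fun n => ?_⟩
  convert add_mem (hT.nsmul_add_nsmul_mem hrx hxs hrs hρd n)
    (add_mem (nsmul_mem hρ m) (nsmul_mem hrsW n)) using 1
  simp only [AddMonoidHom.coe_snd, smul_add]
  abel

end IsTranslationStable
end Transformers

/-! ### Reflexive-transitive closure -/

section Star

variable {A B C : Type*} [AddCommMonoid A] [AddCommMonoid B] [AddCommMonoid C]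

/-- The composition of additive relations. -/
def relComp (L : AddSubmonoid (A × B)) (M : AddSubmonoid (B × C)) : AddSubmonoid (A × C) where
  carrier := (L : SetRel A B) ○ (M : SetRel B C)
  zero_mem' := ⟨0, zero_mem L, zero_mem M⟩
  add_mem' := by
    rintro _ _ ⟨b, hL, hM⟩ ⟨b', hL', hM'⟩
    exact ⟨b + b', add_mem hL hL', add_mem hM hM'⟩

theorem isTameSubmonoid_relComp [IsCancelAdd B] [IsAddTorsionFree B] {L : AddSubmonoid (A × B)}
    {M : AddSubmonoid (B × C)} (hL : IsTameSubmonoid L) (hM : IsTameSubmonoid M) :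
    IsTameSubmonoid (relComp L M) := by
  have h : relComp L M = (L.prod M ⊓ composablePairs A B C).map
      ((AddMonoidHom.fst A B).prodMap (AddMonoidHom.snd B C)) :=
    SetLike.coe_injective (comp_eq_image (L : SetRel A B) (M : SetRel B C))
  exact h ▸ ((hL.prod hM).inf (.eqLocusM _ _)).map _

theorem wellQuasiOrdered_sublistForall₂ {α : Type*} {le : α → α → Prop} [IsPreorder α le]
    (h : WellQuasiOrdered le) : WellQuasiOrdered (List.SublistForall₂ le) := fun f =>
  ((partiallyWellOrderedOn_univ_iff.2 h).partiallyWellOrderedOn_sublistForall₂ le).exists_lt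
    (f := f) fun _ _ _ => trivial

variable {ι : Type*} {J : Set ι} {T : SetRel (ι → ℕ) (ι → ℕ)} {c c' e r s : ι → ℕ} {l l' : List T}

namespace IsTranslationStable

/-- The pumping vectors of the run from `c` through the transitions `l`: a transformer before every
transition and one at the end, and a pumping vector of every transition. -/
def runPumps (hT : IsTranslationStable J T) (D : PumpingOrder T) :
    (ι → ℕ) → List T → AddSubmonoid ((ι → ℕ) × (ι → ℕ))
  | c, [] => hT.transformers c
  | c, t :: l =>
    relComp (relComp (hT.transformers c) (D.pumps t)) (hT.runPumps D (t : (ι → ℕ) × (ι → ℕ)).2 l)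

/-- The runs of `T` as walks of transitions. -/
abbrev IsRun (T : SetRel (ι → ℕ) (ι → ℕ)) : (ι → ℕ) → List T → (ι → ℕ) → Prop :=
  IsWalk (fun t => t.1.1) (fun t => t.1.2)

theorem isTameSubmonoid_runPumps [Finite ι] (hT : IsTranslationStable J T) (D : PumpingOrder T)
    (l : List T) (hc : c ∈ zeroOn J) : IsTameSubmonoid (hT.runPumps D c l) := by
  induction l generalizing c with
  | nil => exact hT.isTameSubmonoid_transformers hc ⟨D⟩
  | cons t l ih =>
    exact isTameSubmonoid_relComp
      (isTameSubmonoid_relComp (hT.isTameSubmonoid_transformers hc ⟨D⟩) (D.tame t))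
      (ih (hT.mem_prod t t.2).2)

theorem exists_isRun (h : Reaches T c e) : ∃ l, IsRun T c l e := by
  induction h using Relation.ReflTransGen.head_induction_on with
  | refl => exact ⟨[], rfl⟩
  | head hstep _ ih =>
    obtain ⟨l, hl⟩ := ih
    exact ⟨⟨_, hstep⟩ :: l, rfl, hl⟩

theorem reaches_of_isRun (h : IsRun T c l e) : Reaches T c e := by
  induction l generalizing c with
  | nil => exact Eq.symm h ▸ .refl
  | cons t l ih => exact .head (h.1 ▸ t.2) (ih h.2)

theorem reaches_add_of_mem_runPumps (hT : IsTranslationStable J T) (D : PumpingOrder T)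
    (hl : IsRun T c l e) (hrs : (r, s) ∈ hT.runPumps D c l) :
    r ∈ zeroOn J ∧ Reaches T (c + r) (e + s) := by
  induction l generalizing c r with
  | nil =>
    obtain rfl : c = e := hl
    exact ⟨hrs.1.1, hrs.2⟩
  | cons t l ih =>
    obtain ⟨rfl, hl⟩ := hl
    obtain ⟨b, ⟨a, ha, hab⟩, hb⟩ := hrs
    exact ⟨ha.1.1, (ha.2.tail (D.pump_mem t _ hab)).trans (ih hl hb).2⟩

theorem mem_runPumps_of_sublistForall₂ (hT : IsTranslationStable J T) (D : PumpingOrder T)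
    (hll' : List.SublistForall₂ D.le l l') (hc : c ∈ zeroOn J) (hr : r ∈ zeroOn J)
    (hl : IsRun T c l e) (hl' : IsRun T c' l' (e + s)) (hcc' : Reaches T (c + r) c') :
    (r, s) ∈ hT.runPumps D c l := by
  induction hll' generalizing c r c' with
  | @nil l' =>
    obtain rfl : c = e := hl
    have hreach := hcc'.trans (reaches_of_isRun hl')
    exact ⟨⟨hr, mem_zeroOn_of_le le_add_self (hT.mem_zeroOn_of_reaches hreach (add_mem hc hr))⟩,
      hreach⟩
  | @cons t t' l l' hle _ ih =>
    obtain ⟨rfl, hl⟩ := hl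
    obtain ⟨rfl, hl'⟩ := hl'
    dsimp only at hcc' hl'
    obtain ⟨w, hw, hadd⟩ := D.exists_pump _ _ hle
    have hmem := hT.mem_prod t' t'.2
    rw [hadd] at hcc' hmem hl'
    exact ⟨w.2, ⟨w.1, ⟨⟨hr, mem_zeroOn_of_le le_add_self hmem.1⟩, hcc'⟩, hw⟩,
      ih (hT.mem_prod t t.2).2 (mem_zeroOn_of_le le_add_self hmem.2) hl hl' .refl⟩
  | @cons_right t l l' _ ih =>
    obtain ⟨rfl, hl'⟩ := hl'
    exact ih hc hr hl hl' (hcc'.tail t.2)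

theorem isTameSet_reaches [Finite ι] (hT : IsTranslationStable J T) (hTame : IsTameSet T) :
    IsTameSet {p : (ι → ℕ) × (ι → ℕ) | p.1 ∈ zeroOn J ∧ Reaches T p.1 p.2} := by
  obtain ⟨D⟩ := hTame
  have := D.isPreorder
  let Run := {x : (ι → ℕ) × List T × (ι → ℕ) // x.1 ∈ zeroOn J ∧ IsRun T x.1 x.2.1 x.2.2}
  let le (x y : Run) : Prop := x.1.1 ≤ y.1.1 ∧ List.SublistForall₂ D.le x.1.2.1 y.1.2.1 ∧
    x.1.2.2 ≤ y.1.2.2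
  have : IsPreorder (List T) (List.SublistForall₂ D.le) :=
    { refl := Std.Refl.refl, trans := IsTrans.trans }
  have : IsPreorder Run le :=
    { refl := fun x => ⟨le_rfl, refl_of (List.SublistForall₂ D.le) _, le_rfl⟩
      trans := fun x y z hxy hyz => ⟨hxy.1.trans hyz.1,
        trans_of (List.SublistForall₂ D.le) hxy.2.1 hyz.2.1, hxy.2.2.trans hyz.2.2⟩ }
  refine .of_presentation (Ω := Run) le ?_ (fun x => (x.1.1, x.1.2.2))
    (fun x => hT.runPumps D x.1.1 x.1.2.1)
    (fun x => hT.isTameSubmonoid_runPumps D _ x.2.1) ?_ ?_ ?_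
  · exact fun f => (wellQuasiOrdered_le.prod
      ((wellQuasiOrdered_sublistForall₂ D.wqo).prod wellQuasiOrdered_le)) fun n => (f n).1
  · rintro ⟨⟨c, l, e⟩, hc, hl⟩ ⟨⟨c', l', e'⟩, hc', hl'⟩ ⟨hcc', hll', hee'⟩
    obtain ⟨r, rfl⟩ := exists_add_of_le hcc'
    obtain ⟨s, rfl⟩ := exists_add_of_le hee'
    exact ⟨(r, s), hT.mem_runPumps_of_sublistForall₂ D hll' hc
      (mem_zeroOn_of_le le_add_self hc') hl hl' .refl, rfl⟩
  · rintro ⟨⟨c, l, e⟩, hc, hl⟩ ⟨r, s⟩ hrs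
    obtain ⟨hr, hreach⟩ := hT.reaches_add_of_mem_runPumps D hl hrs
    exact ⟨add_mem hc hr, hreach⟩
  · rintro ⟨c, e⟩ ⟨hc, hce⟩
    obtain ⟨l, hl⟩ := exists_isRun hce
    exact ⟨⟨(c, l, e), hc, hl⟩, rfl⟩

end IsTranslationStable
end Star

/-! ### Nested zero tests -/

section ZeroTests

/-- The pairs related by `Reaches T`. -/
def reachRel {A : Type*} (T : SetRel A A) : SetRel A A := {p | Reaches T p.1 p.2}

theorem reachRel_mono {A : Type*} {R S : SetRel A A} (h : R ⊆ S) : reachRel R ⊆ reachRel S :=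
  fun _ hp => Relation.ReflTransGen.mono (fun _ _ hxy => h hxy) _ _ hp

/-- A path of `R ∪ S` splits at its first and last steps in `S`, and in between at those followed
by further steps in `S`. -/
theorem reachRel_union {A : Type*} {R S : SetRel A A} {Z : Set A} (hS : ∀ p ∈ S, p.1 ∈ Z) :
    reachRel (R ∪ S) = reachRel R ∪ ((reachRel R ∩ Prod.snd ⁻¹' Z) ○
      ({p | p.1 ∈ Z ∧ Reaches ((S ○ reachRel R) ∩ Prod.snd ⁻¹' Z) p.1 p.2} ○
        (S ○ reachRel R))) := by
  have hR : reachRel R ⊆ reachRel (R ∪ S) := reachRel_mono subset_union_left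
  have hSR {x y : A} (h : (x, y) ∈ S ○ reachRel R) : Reaches (R ∪ S) x y := by
    obtain ⟨u, hxu, huy⟩ := h
    exact .head (.inr hxu) (hR huy)
  refine Subset.antisymm ?_ (union_subset hR ?_)
  · rintro ⟨x, y⟩ (h : Reaches (R ∪ S) x y)
    induction h with
    | refl => exact .inl .refl
    | @tail y y' _ hyy' ih =>
      rcases hyy' with hyy' | hyy'
      · rcases ih with hxy | ⟨a, hxa, b, hab, u, hbu, huy⟩
        · exact .inl (hxy.tail hyy')
        · exact .inr ⟨a, hxa, b, hab, u, hbu, huy.tail hyy'⟩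
      · have hy : y ∈ Z := hS _ hyy'
        rcases ih with hxy | ⟨a, hxa, b, hab, hby⟩
        · exact .inr ⟨y, ⟨hxy, hy⟩, y, ⟨hy, .refl⟩, y', hyy', .refl⟩
        · exact .inr ⟨a, hxa, y, ⟨hab.1, hab.2.tail ⟨hby, hy⟩⟩, y', hyy', .refl⟩
  · rintro ⟨x, y⟩ ⟨a, ⟨hxa, -⟩, b, ⟨-, hloop⟩, hby⟩
    have hab : Reaches (R ∪ S) a b := Relation.reflTransGen_closed (fun _ _ h => hSR h.1) _ _ hloop
    exact (hR hxa).trans (hab.trans (hSR hby))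

theorem IsTameSet.vadd_of_fg {N : Type*} [AddCommMonoid N] (x : N) {P : AddSubmonoid N}
    (hP : P.FG) : IsTameSet (x +ᵥ (P : Set N)) :=
  .of_isLinearSet (isLinearSet_iff_exists_fg_eq_vadd.2 ⟨x, P, hP, rfl⟩)

variable {κ : Type*} {J : ℕ → Set κ} {T : ℕ → SetRel (κ → ℕ) (κ → ℕ)}

/-- The relations `T k` test the coordinates in `J k` for zero, and leave the others available for
adding a common vector to both sides. -/
structure IsZeroTesting (J : ℕ → Set κ) (T : ℕ → SetRel (κ → ℕ) (κ → ℕ)) : Prop where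
  fst_mem : ∀ k, ∀ p ∈ T k, p.1 ∈ zeroOn (J k)
  add_diag_mem : ∀ k, ∀ p ∈ T k, ∀ z ∈ zeroOn (J k), p + (z, z) ∈ T k

namespace IsZeroTesting

theorem add_diag_mem_reachRel (hT : IsZeroTesting J T) (hJ : Monotone J) {k : ℕ}
    {p : (κ → ℕ) × (κ → ℕ)} (hp : p ∈ reachRel (⋃ l < k, T l)) {z : κ → ℕ}
    (hz : z ∈ zeroOn (J k)) : p + (z, z) ∈ reachRel (⋃ l < k, T l) := by
  refine hp.lift (· + z) fun x y hxy => ?_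
  obtain ⟨l, hl, hxy⟩ := mem_iUnion₂.1 hxy
  exact mem_iUnion₂.2 ⟨l, hl, hT.add_diag_mem l _ hxy z fun j hj => hz j (hJ hl.le hj)⟩

theorem isTranslationStable_comp_reachRel (hT : IsZeroTesting J T) (hJ : Monotone J) (k : ℕ) :
    IsTranslationStable (J k)
      ((T k ○ reachRel (⋃ l < k, T l)) ∩ Prod.snd ⁻¹' (zeroOn (J k) : Set (κ → ℕ))) where
  mem_prod := by
    rintro ⟨x, y⟩ ⟨⟨u, hxu, -⟩, hy⟩
    exact ⟨hT.fst_mem k (x, u) hxu, hy⟩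
  add_diag_mem := by
    rintro ⟨x, y⟩ ⟨⟨u, hxu, huy⟩, hy⟩ z hz
    exact ⟨⟨u + z, hT.add_diag_mem k _ hxu z hz, hT.add_diag_mem_reachRel hJ huy hz⟩,
      add_mem hy hz⟩

theorem isTameSet_reachRel [Finite κ] (hT : IsZeroTesting J T) (hJ : Monotone J)
    (hTame : ∀ k, IsTameSet (T k)) (k : ℕ) : IsTameSet (reachRel (⋃ l < k, T l)) := by
  induction k with
  | zero =>
    have hdiag : reachRel (∅ : SetRel (κ → ℕ) (κ → ℕ)) =
        (AddMonoidHom.id _).prod (AddMonoidHom.id _) ''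
          ((0 : κ → ℕ) +ᵥ ((⊤ : AddSubmonoid (κ → ℕ)) : Set (κ → ℕ))) := by
      ext ⟨x, y⟩
      have hempty : Reaches (∅ : SetRel (κ → ℕ) (κ → ℕ)) x y ↔ x = y :=
        Relation.reflTransGen_iff_eq (fun _ h => h) |>.trans eq_comm
      simpa [reachRel] using hempty
    simp only [not_lt_zero, iUnion_of_empty, iUnion_empty, hdiag]
    exact (IsTameSet.vadd_of_fg 0 (P := ⊤) AddMonoid.FG.fg_top).image _
  | succ k ih =>
    rw [biUnion_lt_succ, reachRel_union (hT.fst_mem k)]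
    have hlin := (isLinearTrace_zeroOn (J k)).comap (AddMonoidHom.snd (κ → ℕ) (κ → ℕ))
    have hloop := (hT.isTranslationStable_comp_reachRel hJ k).isTameSet_reaches
      (((hTame k).comp ih).inter hlin)
    exact ih.union ((ih.inter hlin).comp (hloop.comp ((hTame k).comp ih)))

end IsZeroTesting
end ZeroTests

/-! ### Linearizations -/

section Linearizations

variable {N : Type*} [AddCommMonoid N]

theorem IsLinearTrace.groupTrace_le {P U : AddSubmonoid N} (hU : IsLinearTrace U) (h : P ≤ U) :
    groupTrace P ≤ U := by
  rintro x ⟨p, hp, hxp⟩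
  exact hU.mem_of_add_mem p (h hp) x (by rw [add_comm]; exact h hxp)

theorem groupTrace_le_spanTrace (P : AddSubmonoid N) : groupTrace P ≤ spanTrace P :=
  (isLinearTrace_spanTrace P).groupTrace_le (le_spanTrace P)

theorem le_groupTrace_of_vadd_subset_vadd [IsCancelAdd N] {P R : AddSubmonoid N} {b f : N}
    (h : b +ᵥ (P : Set N) ⊆ f +ᵥ (R : Set N)) : P ≤ groupTrace R := by
  intro p hp
  obtain ⟨r, hr, hb⟩ := h (vadd_mem_vadd_set (zero_mem P))
  obtain ⟨r', hr', hbp⟩ := h (vadd_mem_vadd_set hp)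
  simp only [vadd_eq_add, add_zero] at hb hbp
  rw [← hb, add_assoc] at hbp
  exact ⟨r, hr, by rwa [add_comm, ← add_left_cancel hbp]⟩

theorem DenseIn.le_of_isLinearTrace {P C U : AddSubmonoid N} (h : DenseIn P C)
    (hU : IsLinearTrace U) (hP : P ≤ U) : C ≤ U := by
  obtain ⟨p₀, hp₀, hC⟩ := h.exists_offset
  intro c hc
  obtain ⟨k, hk, hmem⟩ := hC c hc
  refine hU.mem_of_add_mem p₀ (hP hp₀) c ?_
  rw [add_comm]
  exact hU.mem_of_nsmul_mem k hk _ (hP hmem)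

theorem nsmul_mem_vadd {P : AddSubmonoid N} {x z : N} (hx : x ∈ P)
    (hz : z ∈ x +ᵥ (P : Set N)) {k : ℕ} (hk : k ≠ 0) : k • z ∈ x +ᵥ (P : Set N) := by
  obtain ⟨p, hp, rfl⟩ := hz
  obtain ⟨k, rfl⟩ := Nat.exists_eq_succ_of_ne_zero hk
  refine ⟨k • x + (k + 1) • p, add_mem (nsmul_mem hx k) (nsmul_mem hp _), ?_⟩
  simp only [vadd_eq_add, smul_add, succ_nsmul' x, Nat.succ_eq_add_one, add_assoc]

theorem DenseIn.exists_nsmul_add_mem_vadd {P C R : AddSubmonoid N} (h : DenseIn P C)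
    (hR : R ≤ C) (hPR : P ≤ spanTrace R) {x : N} (hx : x ∈ P) :
    ∃ r ∈ R, ∀ t ∈ R, ∃ k : ℕ, k ≠ 0 ∧ k • (r + t) ∈ x +ᵥ (P : Set N) := by
  obtain ⟨p₀, hp₀, hC⟩ := h.exists_offset
  obtain ⟨n, hn, r', hr', hr⟩ := hPR (add_mem hx hp₀)
  refine ⟨_, hr, fun t ht => ?_⟩
  obtain ⟨k, hk, hmem⟩ := hC _ (add_mem (hR hr') (hR ht))
  obtain ⟨n, rfl⟩ := Nat.exists_eq_succ_of_ne_zero hn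
  have hsum : k • ((n + 1) • (x + p₀) + r' + t) =
      k • (x + n • (x + p₀)) + k • (r' + t + p₀) := by
    rw [← smul_add, succ_nsmul]
    abel_nf
  have hmem' : k • (x + n • (x + p₀)) ∈ x +ᵥ (P : Set N) :=
    nsmul_mem_vadd hx (vadd_mem_vadd_set (nsmul_mem (add_mem hx hp₀) n)) hk
  obtain ⟨p, hp, hxp⟩ := hmem'
  refine ⟨k, hk, p + k • (r' + t + p₀), add_mem hp hmem, ?_⟩
  rw [hsum, ← hxp]
  exact (add_assoc x p _).symm

/-- If `C ⊓ D` spans both periods, then a common point of the two linearizations can be pushed along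
`C ⊓ D` into both sets. -/
theorem not_disjoint_vadd_of_le_spanTrace {P Q C D : AddSubmonoid N} {b c u v : N}
    (hP : DenseIn P C) (hQ : DenseIn Q D) (hPCD : P ≤ spanTrace (C ⊓ D))
    (hQCD : Q ≤ spanTrace (C ⊓ D)) (hu : u ∈ groupTrace P) (hv : v ∈ groupTrace Q)
    (huv : b + u = c + v) : ¬ Disjoint (b +ᵥ (P : Set N)) (c +ᵥ (Q : Set N)) := by
  obtain ⟨p, hp, hup⟩ := hu
  obtain ⟨q, hq, hvq⟩ := hv
  obtain ⟨r, hr, hrP⟩ := hP.exists_nsmul_add_mem_vadd inf_le_left hPCD hp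
  obtain ⟨t, ht, htQ⟩ := hQ.exists_nsmul_add_mem_vadd inf_le_right hQCD hq
  obtain ⟨k, hk, hkP⟩ := hrP t ht
  obtain ⟨l, hl, hlQ⟩ := htQ r hr
  obtain ⟨p', hp', hp's⟩ := nsmul_mem_vadd hp hkP hl
  obtain ⟨q', hq', hq's⟩ := nsmul_mem_vadd hq hlQ hk
  rw [smul_comm l k, add_comm t r] at *
  have hsame : b + (u + p + p') = c + (v + q + q') := by
    rw [add_assoc u, add_assoc v, ← add_assoc b, ← add_assoc c, huv]
    exact congrArg _ (hp's.trans hq's.symm)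
  exact not_disjoint_iff.2 ⟨_, ⟨_, add_mem hup hp', hsame⟩, _, add_mem hvq hq', rfl⟩

theorem fg_inf [IsCancelAdd N] {C D : AddSubmonoid N} (hC : C.FG) (hD : D.FG) : (C ⊓ D).FG := by
  obtain ⟨n, φ, rfl⟩ := AddSubmonoid.fg_iff_exists_fin_addMonoidHom.1 hC
  obtain ⟨m, ψ, rfl⟩ := AddSubmonoid.fg_iff_exists_fin_addMonoidHom.1 hD
  have hrange : AddMonoidHom.mrange φ ⊓ AddMonoidHom.mrange ψ =
      ((φ.comp (.fst _ _)).eqLocusM (ψ.comp (.snd _ _))).map (φ.comp (.fst _ (Fin m → ℕ))) := by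
    ext x
    constructor
    · rintro ⟨⟨s, hs⟩, t, ht⟩
      exact ⟨(s, t), hs.trans ht.symm, hs⟩
    · rintro ⟨⟨s, t⟩, h : φ s = ψ t, rfl⟩
      exact ⟨⟨s, rfl⟩, t, h.symm⟩
  exact hrange ▸ (AddSubmonoid.fg_eqLocusM _ _).map _

theorem exists_finset_vadd_inter_vadd_subset [IsCancelAdd N] {C D : AddSubmonoid N} (hC : C.FG)
    (hD : D.FG) (b c : N) :
    ∃ F : Finset N, (b +ᵥ (C : Set N)) ∩ (c +ᵥ (D : Set N)) ⊆
      ⋃ f ∈ F, f +ᵥ ((C ⊓ D : AddSubmonoid N) : Set N) := by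
  classical
  obtain ⟨n, φ, rfl⟩ := AddSubmonoid.fg_iff_exists_fin_addMonoidHom.1 hC
  obtain ⟨m, ψ, rfl⟩ := AddSubmonoid.fg_iff_exists_fin_addMonoidHom.1 hD
  obtain ⟨F, hF⟩ := exists_finset_basis_of_wellQuasiOrdered
    (Ω := {p : (Fin n → ℕ) × (Fin m → ℕ) // b + φ p.1 = c + ψ p.2}) (le := (· ≤ ·))
    fun f => wellQuasiOrdered_le fun i => (f i).1
  refine ⟨F.image fun p => b + φ p.1.1, ?_⟩
  rintro _ ⟨⟨_, ⟨s, rfl⟩, rfl⟩, _, ⟨t, rfl⟩, hst⟩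
  obtain ⟨⟨⟨s₀, t₀⟩, h₀⟩, hmem, hle⟩ := hF ⟨(s, t), hst.symm⟩
  obtain ⟨ds, rfl⟩ := exists_add_of_le hle.1
  obtain ⟨dt, rfl⟩ := exists_add_of_le hle.2
  simp only [vadd_eq_add, map_add, ← add_assoc] at hst h₀
  rw [← h₀] at hst
  refine mem_biUnion (Finset.mem_image_of_mem _ hmem)
    ⟨φ ds, ⟨⟨ds, rfl⟩, dt, add_left_cancel hst⟩, ?_⟩
  simp only [vadd_eq_add, map_add, add_assoc]

/-- The linearization of `P` in `C ≥ P`: the elements of `C` in the group generated by `P`. -/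
def linearization (P C : AddSubmonoid N) : AddSubmonoid N := C ⊓ groupTrace P

/-- `X` is a finite union of sets `b + P` with each `P` dense in a finitely generated `C`, and `X'`
is the union of the sets `b + linearization P C`. -/
inductive IsLinearization : Set N → Set N → Prop
  | empty : IsLinearization ∅ ∅
  | vadd (b : N) {P C : AddSubmonoid N} (hC : C.FG) (hPC : DenseIn P C) :
    IsLinearization (b +ᵥ (P : Set N)) (b +ᵥ (linearization P C : Set N))
  | union {X X' Y Y' : Set N} (hX : IsLinearization X X') (hY : IsLinearization Y Y') :
    IsLinearization (X ∪ Y) (X' ∪ Y')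

theorem IsLinearization.subset {X X' : Set N} (h : IsLinearization X X') : X ⊆ X' := by
  induction h with
  | empty => exact Subset.rfl
  | vadd b _ hPC => exact vadd_set_mono (le_inf hPC.le (le_groupTrace _))
  | union _ _ hX hY => exact union_subset_union hX hY

theorem IsLinearization.isSemilinearSet {X X' : Set N} (h : IsLinearization X X') :
    IsSemilinearSet X' := by
  induction h with
  | empty => exact .empty
  | @vadd b P C hC _ =>
    exact .vadd b (.of_fg (fg_inf_of_subtractive hC (groupTrace_subtractive P)))
  | union _ _ hX hY => exact hX.union hY

theorem IsTameSet.exists_isLinearization {X : Set N} (h : IsTameSet X) :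
    ∃ X', IsLinearization X X' := by
  classical
  obtain ⟨F, P, hP, hX⟩ := h.exists_finset_eq_biUnion
  suffices ∀ G : Finset X, ∃ X', IsLinearization (⋃ b ∈ G, (b : N) +ᵥ (P b : Set N)) X' from
    hX ▸ this F
  intro G
  induction G using Finset.induction_on with
  | empty =>
    simp only [Finset.notMem_empty, iUnion_of_empty, iUnion_empty]
    exact ⟨∅, .empty⟩
  | insert b G _ ih =>
    obtain ⟨C, hC, hPC⟩ := (hP b).nearlyFG
    obtain ⟨X', hX'⟩ := ih
    rw [Finset.set_biUnion_insert]
    exact ⟨_, .union (.vadd (b : N) hC hPC) hX'⟩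

end Linearizations

/-! ### Dimension -/

section Rank

variable {κ : Type*}

/-- The inclusion of `ℕ^κ` into `ℚ^κ`. -/
def natCastPi (κ : Type*) : (κ → ℕ) →+ (κ → ℚ) := (Nat.castAddMonoidHom ℚ).compLeft κ

theorem natCastPi_injective : Function.Injective (natCastPi κ) :=
  fun _ _ h => funext fun i => Nat.cast_injective (congrFun h i)

/-- The `ℚ`-subspace of `ℚ^κ` spanned by `P`. -/
def rationalSpan (P : AddSubmonoid (κ → ℕ)) : Submodule ℚ (κ → ℚ) :=
  Submodule.span ℚ (natCastPi κ '' P)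

/-- The dimension of the `ℚ`-subspace spanned by `P`. -/
noncomputable def rationalRank (P : AddSubmonoid (κ → ℕ)) : ℕ := Module.finrank ℚ (rationalSpan P)

theorem exists_nsmul_add_eq_of_mem_rationalSpan {P : AddSubmonoid (κ → ℕ)} {v : κ → ℚ}
    (hv : v ∈ rationalSpan P) : ∃ k : ℕ, k ≠ 0 ∧ ∃ p ∈ P, ∃ q ∈ P,
      k • v + natCastPi κ p = natCastPi κ q := by
  induction hv using Submodule.span_induction with
  | mem _ hx =>
    obtain ⟨q, hq, rfl⟩ := hx
    exact ⟨1, one_ne_zero, 0, zero_mem P, q, hq, by simp⟩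
  | zero => exact ⟨1, one_ne_zero, 0, zero_mem P, 0, zero_mem P, by simp⟩
  | add v w _ _ hv hw =>
    obtain ⟨k, hk, p, hp, q, hq, hpq⟩ := hv
    obtain ⟨l, hl, p', hp', q', hq', hpq'⟩ := hw
    refine ⟨k * l, mul_ne_zero hk hl, l • p + k • p', add_mem (nsmul_mem hp l) (nsmul_mem hp' k),
      l • q + k • q', add_mem (nsmul_mem hq l) (nsmul_mem hq' k), ?_⟩
    simp only [map_add, map_nsmul, ← hpq, ← hpq']
    module
  | smul a v _ hv =>
    obtain ⟨k, hk, p, hp, q, hq, hpq⟩ := hv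
    have hden : (a.den * k) • a • v = a.num • k • v := by
      rw [mul_comm, mul_smul, smul_comm a.num, ← Int.cast_smul_eq_zsmul ℚ, ← Rat.den_mul_eq_num,
        mul_smul, Nat.cast_smul_eq_nsmul]
    refine ⟨a.den * k, mul_ne_zero a.den_nz hk, ?_⟩
    rw [hden]
    obtain ⟨n, hn | hn⟩ := a.num.eq_nat_or_neg
    · refine ⟨n • p, nsmul_mem hp n, n • q, nsmul_mem hq n, ?_⟩
      rw [hn, natCast_zsmul, map_nsmul, map_nsmul, ← hpq, smul_add]
    · refine ⟨n • q, nsmul_mem hq n, n • p, nsmul_mem hp n, ?_⟩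
      rw [hn, neg_smul, natCast_zsmul, map_nsmul, map_nsmul, ← hpq, smul_add,
        neg_add_cancel_left]

theorem natCastPi_mem_rationalSpan_iff {P : AddSubmonoid (κ → ℕ)} {x : κ → ℕ} :
    natCastPi κ x ∈ rationalSpan P ↔ x ∈ spanTrace P := by
  constructor
  · intro hx
    obtain ⟨k, hk, p, hp, q, hq, hpq⟩ := exists_nsmul_add_eq_of_mem_rationalSpan hx
    have hxq : k • x + p = q := natCastPi_injective (by rwa [map_add, map_nsmul])
    exact ⟨k, hk, p, hp, hxq ▸ hq⟩
  · rintro ⟨k, hk, p, hp, hxp⟩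
    have hspan {y : κ → ℕ} (hy : y ∈ P) : natCastPi κ y ∈ rationalSpan P :=
      Submodule.subset_span (mem_image_of_mem _ hy)
    have hkx := hspan hxp
    rw [map_add, Submodule.add_mem_iff_left _ (hspan hp), map_nsmul,
      ← Nat.cast_smul_eq_nsmul ℚ] at hkx
    exact (Submodule.smul_mem_iff _ (Nat.cast_ne_zero.2 hk)).1 hkx

theorem rationalSpan_le_iff {P R : AddSubmonoid (κ → ℕ)} :
    rationalSpan P ≤ rationalSpan R ↔ P ≤ spanTrace R := by
  simp only [rationalSpan, Submodule.span_le, Set.image_subset_iff]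
  exact forall₂_congr fun _ _ => natCastPi_mem_rationalSpan_iff

theorem rationalRank_lt_rationalRank [Finite κ] {P R : AddSubmonoid (κ → ℕ)}
    (h : P ≤ spanTrace R) (h' : ¬ R ≤ spanTrace P) : rationalRank P < rationalRank R :=
  Submodule.finrank_lt_finrank_of_lt
    (lt_of_le_not_ge (rationalSpan_le_iff.2 h) (mt rationalSpan_le_iff.1 h'))

/-- `X` is covered by finitely many linear sets of dimension less than `n`. -/
def HasDimLT (n : ℕ) (X : Set (κ → ℕ)) : Prop :=
  ∃ 𝓛 : Set (Set (κ → ℕ)), 𝓛.Finite ∧ X ⊆ ⋃₀ 𝓛 ∧ ∀ L ∈ 𝓛,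
    ∃ (f : κ → ℕ) (R : AddSubmonoid (κ → ℕ)),
      R.FG ∧ rationalRank R < n ∧ L = f +ᵥ (R : Set (κ → ℕ))

namespace HasDimLT

theorem empty (n : ℕ) : HasDimLT n (∅ : Set (κ → ℕ)) :=
  ⟨∅, finite_empty, empty_subset _, fun _ h => h.elim⟩

theorem mono {m n : ℕ} {X Y : Set (κ → ℕ)} (hY : HasDimLT m Y) (hmn : m ≤ n) (hXY : X ⊆ Y) :
    HasDimLT n X := by
  obtain ⟨𝓛, hfin, hcover, h𝓛⟩ := hY
  refine ⟨𝓛, hfin, hXY.trans hcover, fun L hL => ?_⟩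
  obtain ⟨f, R, hR, hrank, rfl⟩ := h𝓛 L hL
  exact ⟨f, R, hR, hrank.trans_le hmn, rfl⟩

theorem biUnion {ι : Type*} {n : ℕ} {I : Set ι} (hI : I.Finite) {X : ι → Set (κ → ℕ)}
    (hX : ∀ i ∈ I, HasDimLT n (X i)) : HasDimLT n (⋃ i ∈ I, X i) := by
  choose! 𝓛 hfin hcover h𝓛 using hX
  refine ⟨⋃ i ∈ I, 𝓛 i, hI.biUnion hfin, ?_, fun L hL => ?_⟩
  · simp only [sUnion_iUnion]
    exact iUnion₂_mono hcover
  · obtain ⟨i, hi, hL⟩ := mem_iUnion₂.1 hL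
    exact h𝓛 i hi L hL

theorem union {n : ℕ} {X Y : Set (κ → ℕ)} (hX : HasDimLT n X) (hY : HasDimLT n Y) :
    HasDimLT n (X ∪ Y) := by
  have := biUnion (I := univ) finite_univ (X := fun b : Bool => bif b then X else Y)
    fun b _ => by cases b <;> assumption
  rwa [biUnion_univ, ← union_eq_iUnion] at this

end HasDimLT

variable [Finite κ] {f : κ → ℕ} {R : AddSubmonoid (κ → ℕ)}

theorem hasDimLT_vadd_inter_vadd {P Q C D : AddSubmonoid (κ → ℕ)} {b c : κ → ℕ}
    (hC : C.FG) (hD : D.FG) (hPC : DenseIn P C) (hQD : DenseIn Q D)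
    (hPR : b +ᵥ (P : Set (κ → ℕ)) ⊆ f +ᵥ (R : Set (κ → ℕ)))
    (hQR : c +ᵥ (Q : Set (κ → ℕ)) ⊆ f +ᵥ (R : Set (κ → ℕ)))
    (hdisj : Disjoint (b +ᵥ (P : Set (κ → ℕ))) (c +ᵥ (Q : Set (κ → ℕ)))) :
    HasDimLT (rationalRank R) ((b +ᵥ (linearization P C : Set (κ → ℕ))) ∩
      (c +ᵥ (linearization Q D : Set (κ → ℕ)))) := by
  rcases eq_empty_or_nonempty
    ((b +ᵥ (linearization P C : Set (κ → ℕ))) ∩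
      (c +ᵥ (linearization Q D : Set (κ → ℕ)))) with hempty | hne
  · exact hempty ▸ .empty _
  obtain ⟨_, ⟨u, hu, rfl⟩, v, hv, huv⟩ := hne
  have hP : P ≤ groupTrace R := le_groupTrace_of_vadd_subset_vadd hPR
  have hQ : Q ≤ groupTrace R := le_groupTrace_of_vadd_subset_vadd hQR
  have hrank : rationalRank (C ⊓ D) < rationalRank R := by
    refine rationalRank_lt_rationalRank (inf_le_left.trans (hPC.le_of_isLinearTrace
      (isLinearTrace_spanTrace R) (hP.trans (groupTrace_le_spanTrace R)))) fun hR => ?_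
    have hR' : groupTrace R ≤ spanTrace (C ⊓ D) := (isLinearTrace_spanTrace _).groupTrace_le hR
    exact not_disjoint_vadd_of_le_spanTrace hPC hQD (hP.trans hR') (hQ.trans hR') hu.2 hv.2
      huv.symm hdisj
  obtain ⟨F, hF⟩ := exists_finset_vadd_inter_vadd_subset hC hD b c
  refine ⟨(fun g => g +ᵥ ((C ⊓ D : AddSubmonoid (κ → ℕ)) : Set (κ → ℕ))) '' (F : Set (κ → ℕ)),
    F.finite_toSet.image _, ?_, ?_⟩
  · rw [sUnion_image]
    exact (inter_subset_inter (vadd_set_mono inf_le_left) (vadd_set_mono inf_le_left)).trans hF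
  · rintro _ ⟨g, -, rfl⟩
    exact ⟨g, C ⊓ D, fg_inf hC hD, hrank, rfl⟩

theorem IsLinearization.hasDimLT_inter {X X' Y Y' : Set (κ → ℕ)} (hX : IsLinearization X X')
    (hY : IsLinearization Y Y') (hXR : X ⊆ f +ᵥ (R : Set (κ → ℕ)))
    (hYR : Y ⊆ f +ᵥ (R : Set (κ → ℕ))) (hdisj : Disjoint X Y) :
    HasDimLT (rationalRank R) (X' ∩ Y') := by
  induction hX with
  | empty => exact (empty_inter Y').symm ▸ .empty _
  | union _ _ ih₁ ih₂ =>
    rw [union_inter_distrib_right]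
    rw [union_subset_iff] at hXR
    rw [disjoint_union_left] at hdisj
    exact (ih₁ hXR.1 hdisj.1).union (ih₂ hXR.2 hdisj.2)
  | vadd b hC hPC =>
    induction hY with
    | empty => exact (inter_empty _).symm ▸ .empty _
    | union _ _ ih₁ ih₂ =>
      rw [inter_union_distrib_left]
      rw [union_subset_iff] at hYR
      rw [disjoint_union_right] at hdisj
      exact (ih₁ hYR.1 hdisj.1).union (ih₂ hYR.2 hdisj.2)
    | vadd c hD hQD => exact hasDimLT_vadd_inter_vadd hC hD hPC hQD hXR hYR hdisj

end Rank

/-! ### Separation -/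

section Separation

theorem IsTameSet.of_isSemilinearSet {N : Type*} [AddCommMonoid N] {X : Set N}
    (hX : IsSemilinearSet X) : IsTameSet X := by
  obtain ⟨𝓛, hfin, hlin, rfl⟩ := hX
  have := hfin.to_subtype
  rw [sUnion_eq_iUnion]
  exact .iUnion fun L => .of_isLinearSet (hlin L L.2)

theorem IsTameSet.inter_isTameSet {N : Type*} [AddCommMonoid N] [IsCancelAdd N]
    [IsAddTorsionFree N] {X Y : Set N} (hX : IsTameSet X) (hY : IsTameSet Y) :
    IsTameSet (X ∩ Y) := by
  have hinter : X ∩ Y = AddMonoidHom.fst N N '' (X ×ˢ Y ∩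
      ((AddMonoidHom.fst N N).eqLocusM (.snd N N) : Set (N × N))) := by
    ext x
    constructor
    · rintro ⟨hx, hy⟩
      exact ⟨(x, x), ⟨⟨hx, hy⟩, rfl⟩, rfl⟩
    · rintro ⟨⟨x, y⟩, ⟨⟨hx, hy⟩, h : x = y⟩, rfl⟩
      exact ⟨hx, h ▸ hy⟩
  exact hinter ▸ ((hX.prod hY).inter (.eqLocusM _ _)).image _

variable {κ : Type*} {R : SetRel (κ → ℕ) (κ → ℕ)} {S T : Set (κ → ℕ)}

theorem IsTameSet.inv (hR : IsTameSet R) : IsTameSet R.inv := by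
  have : R.inv = (AddMonoidHom.snd (κ → ℕ) (κ → ℕ)).prod (.fst _ _) '' R :=
    (congrFun image_swap_eq_preimage_swap R).symm
  exact this ▸ hR.image _

theorem IsTameSet.inter_preimage (hR : IsTameSet R) (hS : IsSemilinearSet S)
    (hT : IsSemilinearSet T) : IsTameSet (S ∩ R.preimage T) := by
  have hpre : S ∩ R.preimage T = AddMonoidHom.fst (κ → ℕ) (κ → ℕ) '' (R ∩ S ×ˢ T) := by
    ext x
    constructor
    · rintro ⟨hx, y, hy, hxy⟩
      exact ⟨(x, y), ⟨hxy, hx, hy⟩, rfl⟩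
    · rintro ⟨⟨x, y⟩, ⟨hxy, hx, hy⟩, rfl⟩
      exact ⟨hx, y, hy, hxy⟩
  exact hpre ▸ (hR.inter_isTameSet
    ((of_isSemilinearSet hS).prod (of_isSemilinearSet hT))).image _

/-- Semilinear sets `S` and `T` no point of which are related by `R`: an approximation to a
separating invariant that contains `S` and avoids `T`. -/
structure IsSeparator (R : SetRel (κ → ℕ) (κ → ℕ)) (S T : Set (κ → ℕ)) : Prop where
  left : IsSemilinearSet S
  right : IsSemilinearSet T
  notMem : ∀ x ∈ S, ∀ y ∈ T, (x, y) ∉ R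

theorem IsSeparator.inv (h : IsSeparator R S T) : IsSeparator R.inv T S where
  left := h.right
  right := h.left
  notMem y hy x hx := h.notMem x hx y hy

theorem IsSeparator.exists_enlarge_left (h : IsSeparator R S T) (hR : IsTameSet R)
    {𝓛 : Set (Set (κ → ℕ))} (hfin : 𝓛.Finite) (h𝓛 : ∀ L ∈ 𝓛, IsSemilinearSet L) :
    ∃ S' ⊇ S, IsSeparator R S' T ∧
      ∀ L ∈ 𝓛, ∃ Y', IsLinearization (L ∩ R.preimage T) Y' ∧ L ∩ S'ᶜ ⊆ Y' := by
  choose! Y' hY' using fun L hL => (hR.inter_preimage (h𝓛 L hL) h.right).exists_isLinearization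
  refine ⟨S ∪ ⋃ L ∈ 𝓛, L \ Y' L, subset_union_left, ⟨?_, h.right, ?_⟩, fun L hL =>
    ⟨Y' L, hY' L hL, ?_⟩⟩
  · exact h.left.union (.biUnion hfin fun L hL => (h𝓛 L hL).sdiff (hY' L hL).isSemilinearSet)
  · rintro x (hx | hx) y hy hxy
    · exact h.notMem x hx y hy hxy
    · obtain ⟨L, hL, hxL, hxY⟩ := mem_iUnion₂.1 hx
      exact hxY ((hY' L hL).subset ⟨hxL, y, hy, hxy⟩)
  · rintro x ⟨hxL, hx⟩
    by_contra hxY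
    exact hx (.inr (mem_biUnion hL ⟨hxL, hxY⟩))

variable [Finite κ]

/-- Over each linear set in a cover of `(S ∪ T)ᶜ`, the points related to `T` and the points that the
enlarged `S'` is related to are disjoint, hence so are their linearizations up to smaller
dimension. -/
theorem IsSeparator.exists_refinement [R.IsTrans] (h : IsSeparator R S T) (hR : IsTameSet R)
    {n : ℕ} (hdim : HasDimLT (n + 1) (S ∪ T)ᶜ) :
    ∃ S' ⊇ S, ∃ T' ⊇ T, IsSeparator R S' T' ∧ HasDimLT n (S' ∪ T')ᶜ := by
  obtain ⟨𝓛, hfin, hcover, h𝓛⟩ := hdim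
  have hsemi (L) (hL : L ∈ 𝓛) : IsSemilinearSet L := by
    obtain ⟨f, P, hP, -, rfl⟩ := h𝓛 L hL
    exact .vadd f (.of_fg hP)
  obtain ⟨S', hSS', hS', hY⟩ := h.exists_enlarge_left hR hfin hsemi
  obtain ⟨T', hTT', hT', hX⟩ := hS'.inv.exists_enlarge_left hR.inv hfin hsemi
  choose! Y' hY' hYsub using hY
  choose! X' hX' hXsub using hX
  have hdim' : HasDimLT n (⋃ L ∈ 𝓛, Y' L ∩ X' L) := .biUnion hfin fun L hL => by
    obtain ⟨f, P, -, hrank, hLP⟩ := h𝓛 L hL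
    refine ((hY' L hL).hasDimLT_inter (hX' L hL) (inter_subset_left.trans hLP.le)
      (inter_subset_left.trans hLP.le) (disjoint_left.2 ?_)).mono (Nat.lt_succ_iff.1 hrank) le_rfl
    rintro x ⟨-, y, hy, hxy⟩ ⟨-, z, hz, hzx⟩
    exact hS'.notMem z hz y hy (R.trans hzx hxy)
  refine ⟨S', hSS', T', hTT', hT'.inv, hdim'.mono le_rfl fun x hx => ?_⟩
  obtain ⟨L, hL, hxL⟩ := hcover fun h => hx (h.imp (hSS' ·) (hTT' ·))
  exact mem_biUnion hL ⟨hYsub L hL ⟨hxL, fun h => hx (.inl h)⟩,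
    hXsub L hL ⟨hxL, fun h => hx (.inr h)⟩⟩

theorem IsSeparator.exists_partition [R.IsTrans] (hR : IsTameSet R) (n : ℕ) :
    ∀ {S T : Set (κ → ℕ)}, IsSeparator R S T → HasDimLT n (S ∪ T)ᶜ →
      ∃ S' ⊇ S, ∃ T' ⊇ T, IsSeparator R S' T' ∧ S' ∪ T' = univ := by
  induction n with
  | zero =>
    rintro S T h ⟨𝓛, -, hcover, h𝓛⟩
    refine ⟨S, Subset.rfl, T, Subset.rfl, h, eq_univ_of_forall fun x => ?_⟩
    by_contra hx
    obtain ⟨L, hL, -⟩ := hcover hx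
    obtain ⟨_, _, -, hrank, -⟩ := h𝓛 L hL
    exact Nat.not_lt_zero _ hrank
  | succ n ih =>
    intro S T h hdim
    obtain ⟨S₁, hS, T₁, hT, h₁, hdim₁⟩ := h.exists_refinement hR hdim
    obtain ⟨S', hS', T', hT', h'⟩ := ih h₁ hdim₁
    exact ⟨S', hS.trans hS', T', hT.trans hT', h'⟩

theorem hasDimLT_univ : ∃ n, HasDimLT n (univ : Set (κ → ℕ)) := by
  refine ⟨rationalRank (⊤ : AddSubmonoid (κ → ℕ)) + 1, {univ}, finite_singleton _, by simp, ?_⟩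
  rintro _ rfl
  exact ⟨0, ⊤, AddMonoid.FG.fg_top, Nat.lt_succ_self _, by simp⟩

theorem exists_isSemilinearSet_separating [R.IsRefl] [R.IsTrans] (hR : IsTameSet R) {x y : κ → ℕ}
    (hxy : (x, y) ∉ R) : ∃ S : Set (κ → ℕ), IsSemilinearSet S ∧ x ∈ S ∧ y ∉ S ∧
      ∀ u ∈ S, ∀ v, (u, v) ∈ R → v ∈ S := by
  obtain ⟨n, hn⟩ := hasDimLT_univ (κ := κ)
  have hsep : IsSeparator R {x} {y} := ⟨.singleton x, .singleton y, by simpa using hxy⟩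
  obtain ⟨S, hS, T, hT, h, hcover⟩ := hsep.exists_partition hR n (hn.mono le_rfl (subset_univ _))
  refine ⟨S, h.left, hS rfl, fun hy => h.notMem y hy y (hT rfl) R.rfl, fun u hu v huv => ?_⟩
  rcases hcover.ge (mem_univ v) with hv | hv
  · exact hv
  · exact (h.notMem u hu v hv huv).elim

end Separation

section Semilinear

theorem IsLinearSubset.of_isLinearSet {M : Type*} [AddCommMonoid M] {L : Set M}
    (h : IsLinearSet L) : IsLinearSubset L := by
  obtain ⟨b, n, f, rfl⟩ := isLinearSet_iff_exists_fin_addMonoidHom.1 h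
  refine ⟨b, n, fun i => f fun j => if i = j then 1 else 0, ?_⟩
  ext x
  constructor
  · rintro ⟨_, ⟨c, rfl⟩, rfl⟩
    exact ⟨c, congrArg (b + ·) (f.toNatLinearMap.pi_apply_eq_sum_univ c)⟩
  · rintro ⟨c, rfl⟩
    exact ⟨f c, ⟨c, rfl⟩, congrArg (b + ·) (f.toNatLinearMap.pi_apply_eq_sum_univ c)⟩

theorem IsSemilinearSubset.of_isSemilinearSet {M : Type*} [AddCommMonoid M] {S : Set M}
    (h : IsSemilinearSet S) : IsSemilinearSubset S := by
  obtain ⟨𝓛, hfin, hlin, rfl⟩ := h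
  obtain ⟨n, L, -, rfl⟩ := hfin.fin_param
  exact ⟨n, L, fun i => .of_isLinearSet (hlin _ (mem_range_self i)), sUnion_range L⟩

theorem isSemilinearSet_setOf_add_mem {M N : Type*} [AddCommMonoid M]
    [AddMonoid.FG M] [AddCommMonoid N] {S : Set N} (hS : IsSemilinearSet S) (b : N) (f : M →+ N) :
    IsSemilinearSet {x | b + f x ∈ S} := by
  have hslice : {x | b + f x ∈ S} = AddMonoidHom.snd ℕ M ''
      (((multiplesHom N b).coprod f) ⁻¹' S ∩ AddMonoidHom.fst ℕ M ⁻¹' {1}) := by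
    ext x
    simp
  exact hslice ▸ ((hS.preimage _).inter ((IsSemilinearSet.singleton 1).preimage _)).image _

end Semilinear

theorem eq_and_eq_zero_of_single_add_eq_single {ι : Type*} [DecidableEq ι] {i j : ι} {z : ι → ℕ}
    (h : Pi.single i 1 + z = (Pi.single j 1 : ι → ℕ)) : i = j ∧ z = 0 := by
  obtain rfl : i = j := by
    by_contra hij
    have hi := congrFun h i
    rw [Pi.add_apply, Pi.single_eq_same, Pi.single_eq_of_ne hij] at hi
    omega
  exact ⟨rfl, add_eq_left.1 h⟩

namespace PVASS

/-! ### Encoding of configurations -/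

section Encoding

variable {d : ℕ} (V : PVASS d)

open Classical in
/-- The configuration `(q, x)` as a vector with one coordinate per state, of which only the `q`-th
is nonzero, followed by the counters `x`. -/
noncomputable def encode (c : V.Q × NVec d) : V.Q ⊕ Fin d → ℕ := Sum.elim (Pi.single c.1 1) c.2

open Classical in
/-- What the edge `e` removes: the token at its source and the negative part of its update. -/
noncomputable def consumed (e : V.E) : V.Q ⊕ Fin d → ℕ :=
  Sum.elim (Pi.single (V.src e) 1) fun i => (-V.upd e i).toNat

open Classical in
/-- What the edge `e` adds: a token at its target and the positive part of its update. -/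
noncomputable def produced (e : V.E) : V.Q ⊕ Fin d → ℕ :=
  Sum.elim (Pi.single (V.tgt e) 1) fun i => (V.upd e i).toNat

/-- The coordinates that an edge of test level `k` tests for zero. -/
def tested (k : ℕ) : Set (V.Q ⊕ Fin d) := Sum.inr '' {j | (j : ℕ) < k}

/-- The steps along edges of test level `k`, on arbitrary vectors in place of encoded
configurations. -/
def vectorStep (k : ℕ) : SetRel (V.Q ⊕ Fin d → ℕ) (V.Q ⊕ Fin d → ℕ) :=
  {p | p.1 ∈ zeroOn (V.tested k) ∧ ∃ e, V.test e = k ∧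
    ∃ z, (V.consumed e + z, V.produced e + z) = p}

/-- Reachability for the steps along all edges, on arbitrary vectors. -/
def vectorReach : SetRel (V.Q ⊕ Fin d → ℕ) (V.Q ⊕ Fin d → ℕ) :=
  reachRel (⋃ k < d + 1, V.vectorStep k)

instance isRefl_vectorReach : V.vectorReach.IsRefl := ⟨fun _ => .refl⟩

instance isTrans_vectorReach : V.vectorReach.IsTrans := ⟨fun _ _ _ => .trans⟩

theorem tested_mono : Monotone V.tested :=
  fun _ _ hkl => image_mono fun _ hj => hj.trans_le hkl

theorem isZeroTesting_vectorStep : IsZeroTesting V.tested V.vectorStep where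
  fst_mem _ _ hp := hp.1
  add_diag_mem := by
    rintro k _ ⟨hzero, e, he, z, rfl⟩ w hw
    refine ⟨add_mem hzero hw, e, he, z + w, ?_⟩
    simp only [Prod.mk_add_mk, add_assoc]

theorem isTameSet_vectorStep (k : ℕ) : IsTameSet (V.vectorStep k) := by
  have := V.fintypeE
  have hsteps : V.vectorStep k = ⋃ e : {e // V.test e = k},
      ((V.consumed e, V.produced e) +ᵥ (((⊤ : AddSubmonoid (V.Q ⊕ Fin d → ℕ)).map
        ((AddMonoidHom.id _).prod (.id _)) : AddSubmonoid _) : Set _)) ∩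
      ((zeroOn (V.tested k)).comap (AddMonoidHom.fst _ (V.Q ⊕ Fin d → ℕ)) : Set _) := by
    ext p
    simp only [mem_iUnion]
    constructor
    · rintro ⟨hzero, e, he, z, rfl⟩
      exact ⟨⟨e, he⟩, ⟨_, ⟨z, trivial, rfl⟩, rfl⟩, hzero⟩
    · rintro ⟨⟨e, he⟩, ⟨_, ⟨z, -, rfl⟩, rfl⟩, hzero⟩
      exact ⟨hzero, e, he, z, rfl⟩
  have := V.fintypeQ
  rw [hsteps]
  exact .iUnion fun e => (IsTameSet.vadd_of_fg _ (AddMonoid.FG.fg_top.map _)).inter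
    ((isLinearTrace_zeroOn _).comap _)

theorem isTameSet_vectorReach : IsTameSet V.vectorReach :=
  have := V.fintypeQ
  V.isZeroTesting_vectorStep.isTameSet_reachRel V.tested_mono V.isTameSet_vectorStep _

theorem encode_injective : Function.Injective V.encode := by
  classical
  intro c c' h
  obtain ⟨hstate, hcounters⟩ := Sum.elim_eq_iff.1 h
  refine Prod.ext ?_ hcounters
  by_contra hne
  have hc := congrFun hstate c.1
  rw [Pi.single_eq_same, Pi.single_eq_of_ne hne] at hc
  exact one_ne_zero hc

theorem exists_mem_vectorStep_of_step {c c' : V.Q × NVec d} (h : V.Step c c') :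
    ∃ k < d + 1, (V.encode c, V.encode c') ∈ V.vectorStep k := by
  obtain ⟨e, hsrc, htgt, htest, hupd⟩ := h
  refine ⟨V.test e, Nat.lt_succ_of_le (V.test_le e), ?_, e, rfl,
    Sum.elim 0 fun i => c.2 i - (-V.upd e i).toNat, ?_⟩
  · rintro _ ⟨j, hj, rfl⟩
    exact htest j hj
  · simp only [encode, consumed, produced, hsrc, htgt, Prod.mk.injEq]
    constructor <;> ext (q | i)
    · simp
    · have := hupd i
      simp only [Pi.add_apply, Sum.elim_inr]
      omega
    · simp
    · have := hupd i
      simp only [Pi.add_apply, Sum.elim_inr]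
      omega

theorem mem_vectorReach_of_step {c c' : V.Q × NVec d} (h : V.Step c c') :
    (V.encode c, V.encode c') ∈ V.vectorReach := by
  obtain ⟨k, hk, hstep⟩ := V.exists_mem_vectorStep_of_step h
  exact .single (mem_iUnion₂.2 ⟨k, hk, hstep⟩)

/-- The vector step that starts at `encode c` removes a token from the state of `c`, the only one
present, so that no token is left over and the result is again an encoding. -/
theorem exists_step_of_mem_vectorStep {c : V.Q × NVec d} {y : V.Q ⊕ Fin d → ℕ} {k : ℕ}
    (h : (V.encode c, y) ∈ V.vectorStep k) : ∃ c', y = V.encode c' ∧ V.Step c c' := by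
  classical
  obtain ⟨hzero, e, rfl, z, hz⟩ := h
  obtain ⟨hpre, rfl⟩ := Prod.mk.inj hz
  have hstate : Pi.single (V.src e) 1 + z ∘ Sum.inl = (Pi.single c.1 1 : V.Q → ℕ) :=
    funext fun q => congrFun hpre (.inl q)
  have hcounter (i) : (-V.upd e i).toNat + z (.inr i) = c.2 i := congrFun hpre (.inr i)
  obtain ⟨hsrc, htoken⟩ := eq_and_eq_zero_of_single_add_eq_single hstate
  refine ⟨(V.tgt e, fun i => (V.upd e i).toNat + z (.inr i)), ?_, e, hsrc, rfl,
    fun j hj => hzero (.inr j) ⟨j, hj, rfl⟩, fun i => ?_⟩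
  · ext (q | i)
    · have hq : z (.inl q) = 0 := congrFun htoken q
      simp only [produced, encode, Pi.add_apply, Sum.elim_inl, hq, add_zero]
    · rfl
  · have := hcounter i
    simp only
    omega

theorem exists_reach_of_mem_vectorReach {c : V.Q × NVec d} {y : V.Q ⊕ Fin d → ℕ}
    (h : (V.encode c, y) ∈ V.vectorReach) : ∃ c', y = V.encode c' ∧ V.Reach c c' := by
  change Reaches _ (V.encode c) y at h
  induction h with
  | refl => exact ⟨c, rfl, .refl⟩
  | tail _ hstep ih =>
    obtain ⟨c', rfl, hreach⟩ := ih
    obtain ⟨k, -, hstep⟩ := mem_iUnion₂.1 hstep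
    obtain ⟨c'', rfl, hstep'⟩ := V.exists_step_of_mem_vectorStep hstep
    exact ⟨c'', rfl, hreach.tail hstep'⟩

theorem reach_of_encode_mem_vectorReach {c c' : V.Q × NVec d}
    (h : (V.encode c, V.encode c') ∈ V.vectorReach) : V.Reach c c' := by
  obtain ⟨c'', heq, hreach⟩ := V.exists_reach_of_mem_vectorReach h
  exact V.encode_injective heq ▸ hreach

theorem isSemilinearSet_setOf_encode_mem {S : Set (V.Q ⊕ Fin d → ℕ)} (hS : IsSemilinearSet S)
    (q : V.Q) : IsSemilinearSet {x : NVec d | V.encode (q, x) ∈ S} := by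
  let counters : NVec d →+ (V.Q ⊕ Fin d → ℕ) :=
    { toFun := Sum.elim 0
      map_zero' := Sum.elim_zero_zero
      map_add' := fun x y => by simp only [← Sum.elim_add_add, add_zero] }
  have hsplit (x : NVec d) : V.encode (q, 0) + counters x = V.encode (q, x) := by
    ext (q' | i)
    · rfl
    · exact zero_add _
  simpa only [hsplit] using isSemilinearSet_setOf_add_mem hS (V.encode (q, 0)) counters

end Encoding
end PVASS

/-- If a configuration `C_t` of a PVASS is not reachable from `C_s`,
then there is a set `S` of configurations which is semilinear in every state, is an
inductive invariant, contains `C_s` and avoids `C_t`. -/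
theorem pvass_semilinear_inductive_invariant {d : ℕ} (V : PVASS d)
    (Cs Ct : V.Q × NVec d) (h : ¬ V.Reach Cs Ct) :
    ∃ S : Set (V.Q × NVec d),
      (∀ q : V.Q, IsSemilinearSubset {x : NVec d | (q, x) ∈ S}) ∧
      (∀ c ∈ S, ∀ c', V.Step c c' → c' ∈ S) ∧
      Cs ∈ S ∧ Ct ∉ S := by
  have := V.fintypeQ
  obtain ⟨S, hS, hCs, hCt, hclosed⟩ := exists_isSemilinearSet_separating V.isTameSet_vectorReach
    (mt V.reach_of_encode_mem_vectorReach h)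
  exact ⟨V.encode ⁻¹' S,
    fun q => .of_isSemilinearSet (V.isSemilinearSet_setOf_encode_mem hS q),
    fun c hc c' hstep => hclosed _ hc _ (V.mem_vectorReach_of_step hstep), hCs, hCt⟩
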